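/- arXiv:1610.04738 — 6 statements merged into one kernel-verified Lean document; each statement's English description precedes it below -/
import Mathlib

section
/- Let p > 2, let N ≥ 1 be an integer, and let q > p (the Sobolev-supercritical range q ≥ Np/(N−p) when p < N is allowed). Then there exists a nonconstant radial profile solution of the Neumann problem −Δ_p u + u^{p−1} = u^{q−1} in the unit ball of ℝ^N: a function u ∈ C^1([0,1]) with u(r) > 0 for all r ∈ [0,1], u nondecreasing, u not constant, u'(0) = u'(1) = 0, and such that r ↦ r^{N−1}|u'(r)|^{p−2}u'(r) is differentiable on (0,1) with derivative r^{N−1}(u(r)^{p−1} − u(r)^{q−1}) for every r ∈ (0,1). -/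
open Real Filter Set

noncomputable def flux (p : ℝ) (N : ℕ) (u' : ℝ → ℝ) (s : ℝ) : ℝ :=
  s ^ (N - 1) * (|u' s| ^ (p - 2) * u' s)

def IsRadialNeumannSolution (p : ℝ) (N : ℕ) (f : ℝ → ℝ) (u u' : ℝ → ℝ) : Prop :=
  (∀ r ∈ Set.Icc (0:ℝ) 1, HasDerivWithinAt u (u' r) (Set.Icc 0 1) r) ∧
  ContinuousOn u' (Set.Icc 0 1) ∧
  u' 0 = 0 ∧ u' 1 = 0 ∧
  ∀ r ∈ Set.Ioo (0:ℝ) 1,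
    HasDerivAt (flux p N u') (r ^ (N - 1) * ((u r) ^ (p - 1) - f (u r))) r

open Topology MeasureTheory

noncomputable def Wf (g : ℝ → ℝ) (m : ℕ) (v : ℝ → ℝ) (s : ℝ) : ℝ :=
  s * ∫ t in (0:ℝ)..1, t ^ m * g (v (s * t))

noncomputable def Tf (g ψ : ℝ → ℝ) (m : ℕ) (a : ℝ) (v : ℝ → ℝ) (r : ℝ) : ℝ :=
  a + ∫ s in (0:ℝ)..r, ψ (Wf g m v s)

noncomputable def Pf (g : ℝ → ℝ) (m : ℕ) (v : ℝ → ℝ) (s : ℝ) : ℝ :=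
  ∫ t in (0:ℝ)..s, t ^ m * g (v t)

lemma Wf_cont {X : Type*} [TopologicalSpace X] [FirstCountableTopology X]
    {g : ℝ → ℝ} (hg : Continuous g) (m : ℕ)
    {V : X → ℝ → ℝ} (hV : Continuous (Function.uncurry V)) :
    Continuous (fun x : X × ℝ => Wf g m (V x.1) x.2) := by
  unfold Wf
  refine continuous_snd.mul ?_
  refine intervalIntegral.continuous_parametric_intervalIntegral_of_continuous
    (f := fun (x : X × ℝ) (t : ℝ) => t ^ m * g (V x.1 (x.2 * t))) ?_ continuous_const
  have h : Continuous (fun y : (X × ℝ) × ℝ => Function.uncurry V (y.1.1, y.1.2 * y.2)) :=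
    hV.comp (by fun_prop)
  have h2 := hg.comp h
  exact (continuous_snd.pow m).mul h2

lemma Tf_cont {g ψ : ℝ → ℝ} (hg : Continuous g) (hψ : Continuous ψ) (m : ℕ)
    {V : ℝ → ℝ → ℝ} (hV : Continuous (Function.uncurry V)) :
    Continuous (fun x : ℝ × ℝ => Tf g ψ m x.1 (V x.1) x.2) := by
  unfold Tf
  refine continuous_fst.add ?_
  refine intervalIntegral.continuous_parametric_intervalIntegral_of_continuous
    (f := fun (x : ℝ × ℝ) (t : ℝ) => ψ (Wf g m (V x.1) t)) ?_ continuous_snd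
  have h := (hψ.comp (Wf_cont hg m hV))
  exact h.comp (f := fun y : (ℝ × ℝ) × ℝ => (y.1.1, y.2)) (by fun_prop)

lemma Wf_cont1 {g : ℝ → ℝ} (hg : Continuous g) (m : ℕ) {v : ℝ → ℝ} (hv : Continuous v) :
    Continuous (Wf g m v) := by
  have := Wf_cont (X := Unit) hg m (V := fun _ => v) (hv.comp continuous_snd)
  exact this.comp (f := fun y : ℝ => ((), y)) (by fun_prop)

lemma Wf_congr (g : ℝ → ℝ) (m : ℕ) {v w : ℝ → ℝ} {R s : ℝ} (h : ∀ r ∈ Icc 0 R, v r = w r)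
    (hs : s ∈ Icc 0 R) : Wf g m v s = Wf g m w s := by
  unfold Wf
  congr 1
  refine intervalIntegral.integral_congr fun t ht => ?_
  rw [uIcc_of_le zero_le_one] at ht
  rw [h]
  exact ⟨mul_nonneg hs.1 ht.1, (mul_le_of_le_one_right hs.1 ht.2).trans hs.2⟩

lemma Tf_congr (g ψ : ℝ → ℝ) (m : ℕ) (a : ℝ) {v w : ℝ → ℝ} {R s : ℝ}
    (h : ∀ r ∈ Icc 0 R, v r = w r)
    (hs : s ∈ Icc 0 R) : Tf g ψ m a v s = Tf g ψ m a w s := by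
  unfold Tf
  congr 1
  refine intervalIntegral.integral_congr fun t ht => ?_
  rw [uIcc_of_le hs.1] at ht
  rw [Wf_congr g m h ⟨ht.1, ht.2.trans hs.2⟩]

lemma Tf_zero (g ψ : ℝ → ℝ) (m : ℕ) (a : ℝ) (v : ℝ → ℝ) : Tf g ψ m a v 0 = a := by
  simp [Tf]

lemma Wf_Pf (g : ℝ → ℝ) (m : ℕ) (v : ℝ → ℝ) (s : ℝ) : s ^ m * Wf g m v s = Pf g m v s := by
  unfold Wf Pf
  have := intervalIntegral.mul_integral_comp_mul_left (a := 0) (b := 1)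
    (f := fun t => t ^ m * g (v t)) s
  simp only [mul_zero, mul_one] at this
  rw [← this, mul_left_comm]
  congr 1
  rw [← intervalIntegral.integral_const_mul]
  congr 1
  ext t
  ring

noncomputable def Uf (g ψ : ℝ → ℝ) (m : ℕ) (h : ℝ) : ℕ → ℝ → ℝ → ℝ
  | 0 => fun a _ => a
  | k + 1 => fun a r => Tf g ψ m a (Uf g ψ m h k a) (max (r - h) 0)

lemma Uf_cont {g ψ : ℝ → ℝ} (hg : Continuous g) (hψ : Continuous ψ) (m : ℕ) (h : ℝ) (k : ℕ) :
    Continuous (Function.uncurry (Uf g ψ m h k)) := by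
  induction k with
  | zero => exact continuous_fst
  | succ k ih =>
    exact (Tf_cont hg hψ m ih).comp (f := fun y : ℝ × ℝ => (y.1, max (y.2 - h) 0)) (by fun_prop)

lemma Uf_stable (g ψ : ℝ → ℝ) (m : ℕ) {h : ℝ} (hh : 0 < h) (a : ℝ) (k : ℕ) :
    ∀ r ≤ k * h, Uf g ψ m h (k+1) a r = Uf g ψ m h k a r := by
  induction k with
  | zero =>
    intro r hr
    simp only [Nat.cast_zero, zero_mul] at hr
    have : max (r - h) 0 = 0 := max_eq_right (by linarith)
    simp only [Uf, this, Tf_zero]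
  | succ k ih =>
    intro r hr
    push_cast at hr
    rw [Uf, Uf]
    refine Tf_congr (R := max (k * h) 0) g ψ m a (fun t ht => ih t ?_) ⟨le_max_right _ _, ?_⟩
    · rw [max_eq_left (by positivity)] at ht; exact ht.2
    · exact max_le_max (by linarith) le_rfl

lemma scheme {g ψ : ℝ → ℝ} (hg : Continuous g) (hψ : Continuous ψ) (m : ℕ) {h : ℝ} (hh : 0 < h) :
    ∃ V : ℝ → ℝ → ℝ, Continuous (Function.uncurry V) ∧
      ∀ a, ∀ r ≤ 1, V a r = Tf g ψ m a (V a) (max (r - h) 0) := by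
  obtain ⟨k, hk⟩ := exists_nat_gt (1 / h)
  refine ⟨Uf g ψ m h k, Uf_cont hg hψ m h k, fun a r hr => ?_⟩
  have := Uf_stable g ψ m hh a k r (by rw [div_lt_iff₀ hh] at hk; linarith)
  rw [← this, Uf]

lemma Wf_lim {g : ℝ → ℝ} (hg : Continuous g) {B : ℝ} (hB : ∀ x, |g x| ≤ B) (m : ℕ)
    {vk : ℕ → ℝ → ℝ} {v : ℝ → ℝ} (hvk : ∀ k, Continuous (vk k))
    (hlim : ∀ r ∈ Icc (0:ℝ) 1, Tendsto (fun k => vk k r) atTop (𝓝 (v r)))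
    {s : ℝ} (hs : s ∈ Icc (0:ℝ) 1) :
    Tendsto (fun k => Wf g m (vk k) s) atTop (𝓝 (Wf g m v s)) := by
  unfold Wf
  refine Tendsto.const_mul _ ?_
  refine intervalIntegral.tendsto_integral_filter_of_dominated_convergence (fun _ => B) ?_ ?_ ?_ ?_
  · refine Eventually.of_forall fun k => ?_
    have := hvk k
    exact Continuous.aestronglyMeasurable (by fun_prop)
  · refine Eventually.of_forall fun k => Eventually.of_forall fun t ht => ?_
    rw [uIoc_of_le zero_le_one] at ht
    rw [Real.norm_eq_abs, abs_mul, abs_of_nonneg (pow_nonneg ht.1.le m)]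
    calc t ^ m * |g (vk k (s * t))| ≤ 1 * B :=
          mul_le_mul (pow_le_one₀ ht.1.le ht.2) (hB _) (abs_nonneg _) zero_le_one
      _ = B := one_mul B
  · exact intervalIntegrable_const
  · refine Eventually.of_forall fun t ht => ?_
    rw [uIoc_of_le zero_le_one] at ht
    refine Tendsto.const_mul _ ?_
    exact (hg.tendsto _).comp (hlim (s * t) ⟨mul_nonneg hs.1 ht.1.le,
      (mul_le_of_le_one_right hs.1 ht.2).trans hs.2⟩)

lemma Tf_lim {g ψ : ℝ → ℝ} (hg : Continuous g) {B : ℝ} (hB : ∀ x, |g x| ≤ B)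
    (hψ : Continuous ψ) (hψ0 : ∀ x, 0 ≤ ψ x) (hψ1 : ∀ x, ψ x ≤ 1) (m : ℕ)
    {vk : ℕ → ℝ → ℝ} {v : ℝ → ℝ} (hvk : ∀ k, Continuous (vk k))
    (hlim : ∀ r ∈ Icc (0:ℝ) 1, Tendsto (fun k => vk k r) atTop (𝓝 (v r)))
    {ak : ℕ → ℝ} {a : ℝ} (ha : Tendsto ak atTop (𝓝 a))
    {r : ℝ} (hr : r ∈ Icc (0:ℝ) 1) :
    Tendsto (fun k => Tf g ψ m (ak k) (vk k) r) atTop (𝓝 (Tf g ψ m a v r)) := by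
  unfold Tf
  refine ha.add ?_
  refine intervalIntegral.tendsto_integral_filter_of_dominated_convergence (fun _ => 1) ?_ ?_ ?_ ?_
  · refine Eventually.of_forall fun k => ?_
    exact (hψ.comp (Wf_cont1 hg m (hvk k))).aestronglyMeasurable
  · refine Eventually.of_forall fun k => Eventually.of_forall fun t ht => ?_
    rw [Real.norm_eq_abs, abs_of_nonneg (hψ0 _)]
    exact hψ1 _
  · exact intervalIntegrable_const
  · refine Eventually.of_forall fun t ht => ?_
    rw [uIoc_of_le hr.1] at ht
    exact (hψ.tendsto _).comp (Wf_lim hg hB m hvk hlim ⟨ht.1.le, ht.2.trans hr.2⟩)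

lemma int_lower {f : ℝ → ℝ} (hf : Continuous f) {x y C : ℝ} (hxy : x ≤ y)
    (h : ∀ t ∈ Icc x y, C ≤ f t) :
    C * (y - x) ≤ (∫ t in (0:ℝ)..y, f t) - ∫ t in (0:ℝ)..x, f t := by
  rw [intervalIntegral.integral_interval_sub_left (hf.intervalIntegrable _ _)
    (hf.intervalIntegrable _ _)]
  have := intervalIntegral.integral_mono_on (μ := volume) (f := fun _ => C) hxy
    intervalIntegrable_const
    (hf.intervalIntegrable _ _) h
  simp only [intervalIntegral.integral_const, smul_eq_mul] at this
  linarith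

lemma int_upper {f : ℝ → ℝ} (hf : Continuous f) {x y C : ℝ} (hxy : x ≤ y)
    (h : ∀ t ∈ Icc x y, f t ≤ C) :
    (∫ t in (0:ℝ)..y, f t) - (∫ t in (0:ℝ)..x, f t) ≤ C * (y - x) := by
  have := int_lower (f := fun t => - f t) hf.neg (C := -C) hxy (fun t ht => neg_le_neg (h t ht))
  simp only [intervalIntegral.integral_neg] at this
  linarith

lemma Tf_mono {g ψ : ℝ → ℝ} (hg : Continuous g) (hψ : Continuous ψ) (hψ0 : ∀ x, 0 ≤ ψ x) (m : ℕ)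
    (a : ℝ) {v : ℝ → ℝ} (hv : Continuous v) : Monotone (Tf g ψ m a v) := by
  intro x y hxy
  have := int_lower (hψ.comp (Wf_cont1 hg m hv)) hxy (fun t _ => hψ0 _)
  simp only [Function.comp_def] at this
  unfold Tf
  linarith

lemma Tf_lip {g ψ : ℝ → ℝ} (hg : Continuous g) (hψ : Continuous ψ) (hψ0 : ∀ x, 0 ≤ ψ x)
    (hψ1 : ∀ x, ψ x ≤ 1) (m : ℕ)
    (a : ℝ) {v : ℝ → ℝ} (hv : Continuous v) : LipschitzWith 1 (Tf g ψ m a v) := by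
  refine LipschitzWith.of_le_add fun x y => ?_
  rcases le_total x y with hxy | hxy
  · exact (Tf_mono hg hψ hψ0 m a hv hxy).trans (le_add_of_nonneg_right dist_nonneg)
  · have := int_upper (hψ.comp (Wf_cont1 hg m hv)) hxy (fun t _ => hψ1 _)
    simp only [Function.comp_def] at this
    unfold Tf
    rw [Real.dist_eq, abs_of_nonneg (by linarith)]
    linarith

lemma compactness {g ψ : ℝ → ℝ} (hg : Continuous g) {B : ℝ} (hB : ∀ x, |g x| ≤ B)
    (hψ : Continuous ψ) (hψ0 : ∀ x, 0 ≤ ψ x) (hψ1 : ∀ x, ψ x ≤ 1) (m : ℕ)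
    {vk : ℕ → ℝ → ℝ} (hvk : ∀ k, Continuous (vk k)) {ak : ℕ → ℝ} (hak : ∀ k, ak k ∈ Icc (0:ℝ) 1)
    {h : ℕ → ℝ} (hpos : ∀ k, 0 < h k) (hh : Tendsto h atTop (𝓝 0))
    (heq : ∀ k, ∀ r ≤ 1, vk k r = Tf g ψ m (ak k) (vk k) (max (r - h k) 0)) :
    ∃ (φ : ℕ → ℕ) (v : ℝ → ℝ) (a : ℝ), StrictMono φ ∧ Continuous v ∧
      Tendsto (ak ∘ φ) atTop (𝓝 a) ∧
      (∀ r ∈ Icc (0:ℝ) 1, v r = Tf g ψ m a v r) ∧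
      Tendsto (fun k => Wf g m (vk (φ k)) 1) atTop (𝓝 (Wf g m v 1)) := by
  have hlip : ∀ k, ∀ x ≤ 1, ∀ y ≤ 1, dist (vk k x) (vk k y) ≤ dist x y := by
    intro k x hx y hy
    rw [heq k x hx, heq k y hy]
    refine ((Tf_lip hg hψ hψ0 hψ1 m (ak k) (hvk k)).dist_le_mul _ _).trans ?_
    simp only [NNReal.coe_one, one_mul, Real.dist_eq]
    refine (abs_max_sub_max_le_abs _ _ _).trans ?_
    simp
  have h0 : ∀ k, vk k 0 = ak k := by
    intro k
    rw [heq k 0 zero_le_one, max_eq_right (by linarith [hpos k]), Tf_zero]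
  have hbd : ∀ k, ∀ x ∈ Icc (0:ℝ) 1, vk k x ∈ Icc (-1:ℝ) 2 := by
    intro k x hx
    have := hlip k x hx.2 0 zero_le_one
    rw [h0, Real.dist_eq, Real.dist_eq, sub_zero, abs_of_nonneg hx.1] at this
    have h1 := abs_le.1 this
    have h2 := hak k
    exact ⟨by linarith [h1.1, h2.1, hx.2], by linarith [h1.2, h2.2, hx.2]⟩
  let A : Set (BoundedContinuousFunction (Icc (0:ℝ) 1) ℝ) :=
    {f | LipschitzWith 1 f ∧ ∀ x, f x ∈ Icc (-1:ℝ) 2}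
  have hA : IsCompact (closure A) := by
    refine BoundedContinuousFunction.arzela_ascoli (Icc (-1:ℝ) 2) isCompact_Icc A
      (fun f x hf => hf.2 x) ?_
    exact (LipschitzWith.uniformEquicontinuous (fun (f : A) => (f.1 : Icc (0:ℝ) 1 → ℝ)) 1
      (fun f => f.2.1)).equicontinuous
  let F : ℕ → BoundedContinuousFunction (Icc (0:ℝ) 1) ℝ := fun k =>
    BoundedContinuousFunction.mkOfCompact ⟨fun x => vk k x, (hvk k).comp continuous_subtype_val⟩
  have hF : ∀ k, F k ∈ closure A := by
    intro k
    refine subset_closure ⟨LipschitzWith.of_dist_le_mul fun x y => ?_, fun x => hbd k x x.2⟩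
    simp only [NNReal.coe_one, one_mul]
    exact hlip k x x.2.2 y y.2.2
  obtain ⟨f, -, φ, hφ, hlim⟩ := hA.tendsto_subseq hF
  have hlim' : ∀ r ∈ Icc (0:ℝ) 1, Tendsto (fun k => vk (φ k) r) atTop
      (𝓝 (IccExtend zero_le_one f r)) := by
    intro r hr
    rw [IccExtend_of_mem _ _ hr]
    exact ((BoundedContinuousFunction.lipschitz_eval_const (⟨r, hr⟩ : Icc (0:ℝ) 1)).continuous.tendsto f).comp hlim
  have hv : Continuous (IccExtend (zero_le_one (α := ℝ)) f) := f.continuous.Icc_extend'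
  have ha : Tendsto (ak ∘ φ) atTop (𝓝 (IccExtend (zero_le_one (α := ℝ)) f 0)) := by
    have := hlim' 0 ⟨le_rfl, zero_le_one⟩
    simp only [h0] at this
    exact this
  refine ⟨φ, IccExtend zero_le_one f, _, hφ, hv, ha, ?_, ?_⟩
  · intro r hr
    refine tendsto_nhds_unique (hlim' r hr) ?_
    have h1 := Tf_lim hg hB hψ hψ0 hψ1 m (fun k => hvk (φ k)) hlim' ha hr
    have h2 : Tendsto (fun k => vk (φ k) r - Tf g ψ m ((ak ∘ φ) k) (vk (φ k)) r) atTop (𝓝 0) := by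
      refine squeeze_zero_norm (fun k => ?_) (hh.comp hφ.tendsto_atTop)
      rw [heq (φ k) r hr.2, ← dist_eq_norm]
      refine ((Tf_lip hg hψ hψ0 hψ1 m (ak (φ k)) (hvk (φ k))).dist_le_mul _ _).trans ?_
      simp only [NNReal.coe_one, one_mul, Real.dist_eq, Function.comp]
      have := hpos (φ k)
      rw [abs_le]
      constructor
      · linarith [le_max_left (r - h (φ k)) 0]
      · have : max (r - h (φ k)) 0 ≤ r := max_le (by linarith) hr.1
        linarith
    simpa using h2.add h1
  · exact Wf_lim hg hB m (fun k => hvk (φ k)) hlim' ⟨zero_le_one, le_rfl⟩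

lemma shooting {g ψ : ℝ → ℝ} (hg : Continuous g) {B : ℝ} (hB : ∀ x, |g x| ≤ B)
    (hψ : Continuous ψ) (hψ0 : ∀ x, 0 ≤ ψ x) (hψ1 : ∀ x, ψ x ≤ 1) (m : ℕ)
    {a0 a1 : ℝ} (h0 : 0 ≤ a0) (h01 : a0 ≤ a1) (h1 : a1 ≤ 1)
    (H0 : ∀ v, Continuous v → (∀ r ∈ Icc (0:ℝ) 1, v r = Tf g ψ m a0 v r) → 0 < Wf g m v 1)
    (H1 : ∀ v, Continuous v → (∀ r ∈ Icc (0:ℝ) 1, v r = Tf g ψ m a1 v r) → Wf g m v 1 < 0) :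
    ∃ a ∈ Icc a0 a1, ∃ v, Continuous v ∧ (∀ r ∈ Icc (0:ℝ) 1, v r = Tf g ψ m a v r) ∧
      Wf g m v 1 = 0 := by
  have hp : ∀ k : ℕ, (0:ℝ) < 1 / ((k:ℝ) + 1) := fun k => by positivity
  have ht : Tendsto (fun k : ℕ => 1 / ((k:ℝ) + 1)) atTop (𝓝 0) :=
    tendsto_one_div_add_atTop_nhds_zero_nat
  choose V hV hVe using fun k : ℕ => scheme hg hψ m (hp k)
  have hVc : ∀ k a, Continuous (V k a) := fun k a =>
    (hV k).comp (f := fun r : ℝ => (a, r)) (by fun_prop)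
  have E0 : ∀ᶠ k in atTop, 0 ≤ Wf g m (V k a0) 1 := by
    by_contra hcon
    rw [not_eventually] at hcon
    obtain ⟨σ, hσ, hneg⟩ := extraction_of_frequently_atTop hcon
    obtain ⟨φ, v, a, hφ, hv, ha, hve, hW⟩ := compactness hg hB hψ hψ0 hψ1 m
      (vk := fun k => V (σ k) a0) (fun k => hVc _ _) (ak := fun _ => a0)
      (fun _ => ⟨h0, h01.trans h1⟩) (fun k => hp (σ k)) (ht.comp hσ.tendsto_atTop)
      (fun k => hVe (σ k) a0)
    have haa : a = a0 := tendsto_nhds_unique ha tendsto_const_nhds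
    subst haa
    have := le_of_tendsto hW (Eventually.of_forall fun k => (not_le.1 (hneg (φ k))).le)
    exact absurd (H0 v hv hve) (not_lt.2 this)
  have E1 : ∀ᶠ k in atTop, Wf g m (V k a1) 1 ≤ 0 := by
    by_contra hcon
    rw [not_eventually] at hcon
    obtain ⟨σ, hσ, hneg⟩ := extraction_of_frequently_atTop hcon
    obtain ⟨φ, v, a, hφ, hv, ha, hve, hW⟩ := compactness hg hB hψ hψ0 hψ1 m
      (vk := fun k => V (σ k) a1) (fun k => hVc _ _) (ak := fun _ => a1)
      (fun _ => ⟨h0.trans h01, h1⟩) (fun k => hp (σ k)) (ht.comp hσ.tendsto_atTop)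
      (fun k => hVe (σ k) a1)
    have haa : a = a1 := tendsto_nhds_unique ha tendsto_const_nhds
    subst haa
    have := ge_of_tendsto hW (Eventually.of_forall fun k => (not_le.1 (hneg (φ k))).le)
    exact absurd (H1 v hv hve) (not_lt.2 this)
  obtain ⟨K, hK⟩ := eventually_atTop.1 (E0.and E1)
  have hz : ∀ k, ∃ a ∈ Icc a0 a1, Wf g m (V (k + K) a) 1 = 0 := by
    intro k
    have hc : Continuous (fun a => Wf g m (V (k + K) a) 1) :=
      (Wf_cont hg m (hV (k+K))).comp (f := fun a : ℝ => (a, (1:ℝ))) (by fun_prop)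
    have := intermediate_value_Icc' h01 hc.continuousOn
    obtain ⟨a, ha, hae⟩ := this ⟨(hK (k+K) (by omega)).2, (hK (k+K) (by omega)).1⟩
    exact ⟨a, ha, hae⟩
  choose a ha hae using hz
  obtain ⟨φ, v, b, hφ, hv, hb, hve, hW⟩ := compactness hg hB hψ hψ0 hψ1 m
      (vk := fun k => V (k + K) (a k)) (fun k => hVc _ _) (ak := a)
      (fun k => ⟨h0.trans (ha k).1, (ha k).2.trans h1⟩) (fun k => hp (k + K))
      (ht.comp (tendsto_add_atTop_nat K))
      (fun k => hVe (k + K) (a k))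
  refine ⟨b, ?_, v, hv, hve, ?_⟩
  · exact isClosed_Icc.mem_of_tendsto hb (Eventually.of_forall fun k => ha _)
  · refine tendsto_nhds_unique hW ?_
    simp only [hae]
    exact tendsto_const_nhds

noncomputable def psi (α x : ℝ) : ℝ := (max 0 (min x 1)) ^ α

lemma psi_cont {α : ℝ} (hα : 0 < α) : Continuous (psi α) := by
  unfold psi
  exact Continuous.rpow_const (by fun_prop) (fun _ => Or.inr hα.le)

lemma psi_nonneg (α x : ℝ) : 0 ≤ psi α x := Real.rpow_nonneg (le_max_left _ _) _

lemma psi_le_one {α : ℝ} (hα : 0 < α) (x : ℝ) : psi α x ≤ 1 :=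
  Real.rpow_le_one (le_max_left _ _) (max_le zero_le_one (min_le_right _ _)) hα.le

lemma psi_mono {α : ℝ} (hα : 0 < α) : Monotone (psi α) := fun x y h =>
  Real.rpow_le_rpow (le_max_left _ _) (max_le_max le_rfl (min_le_min h le_rfl)) hα.le

lemma psi_eq {α x : ℝ} (h0 : 0 ≤ x) (h1 : x ≤ 1) : psi α x = x ^ α := by
  unfold psi
  rw [min_eq_left h1, max_eq_right h0]

lemma psi_le {α x y : ℝ} (hα : 0 < α) (h0 : 0 ≤ y) (h1 : x ≤ y) : psi α x ≤ y ^ α := by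
  unfold psi
  exact Real.rpow_le_rpow (le_max_left _ _) (max_le h0 ((min_le_left _ _).trans h1)) hα.le

/-- properties of the (truncated) nonlinearity -/
structure GoodG (p c B : ℝ) (g : ℝ → ℝ) : Prop where
  cont : Continuous g
  bdd : ∀ x, |g x| ≤ B
  le_one : ∀ x, g x ≤ 1
  pos : ∀ x, 0 < x → x < 1 → 0 < g x
  one : g 1 = 0
  anti : AntitoneOn g (Ici 1)
  le_pow : ∀ x, 0 ≤ x → g x ≤ x ^ (p - 1)
  low : ∀ x, 1 / 2 ≤ x → x ≤ 1 → c * (1 - x) ≤ g x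
  up : ∀ x, 1 ≤ x → x ≤ 2 → g x ≤ - (c * (x - 1))

section sol
variable {p c B α a : ℝ} {g v : ℝ → ℝ} {m : ℕ}

lemma GoodG.nonneg (G : GoodG p c B g) {x : ℝ} (h0 : 0 < x) (h1 : x ≤ 1) : 0 ≤ g x := by
  rcases h1.lt_or_eq with h | h
  · exact (G.pos x h0 h).le
  · rw [h, G.one]

lemma GoodG.nonpos (G : GoodG p c B g) {x : ℝ} (h1 : 1 ≤ x) : g x ≤ 0 := by
  rw [← G.one]
  exact G.anti (mem_Ici.2 le_rfl) h1 h1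

lemma sol_mono (hα : 0 < α) (G : GoodG p c B g) (hv : Continuous v)
    (he : ∀ r ∈ Icc (0:ℝ) 1, v r = Tf g (psi α) m a v r) : MonotoneOn v (Icc 0 1) := by
  intro x hx y hy hxy
  rw [he x hx, he y hy]
  exact Tf_mono G.cont (psi_cont hα) (psi_nonneg α) m a hv hxy

lemma sol_zero (he : ∀ r ∈ Icc (0:ℝ) 1, v r = Tf g (psi α) m a v r) : v 0 = a := by
  rw [he 0 ⟨le_rfl, zero_le_one⟩, Tf_zero]

lemma sol_ge (hα : 0 < α) (G : GoodG p c B g) (hv : Continuous v)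
    (he : ∀ r ∈ Icc (0:ℝ) 1, v r = Tf g (psi α) m a v r) {r : ℝ} (hr : r ∈ Icc (0:ℝ) 1) :
    a ≤ v r := by
  rw [← sol_zero he]
  exact sol_mono hα G hv he ⟨le_rfl, zero_le_one⟩ hr hr.1

lemma sol_le (hα : 0 < α) (G : GoodG p c B g) (hv : Continuous v)
    (he : ∀ r ∈ Icc (0:ℝ) 1, v r = Tf g (psi α) m a v r) {r : ℝ} (hr : r ∈ Icc (0:ℝ) 1) :
    v r ≤ a + 1 := by
  rw [he r hr]
  have := int_upper ((psi_cont hα).comp (Wf_cont1 G.cont m hv)) hr.1 (fun t _ => psi_le_one hα _)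
  simp only [Function.comp_def, intervalIntegral.integral_same] at this
  unfold Tf
  linarith [hr.2]

lemma sol_grow (hα : 0 < α) (G : GoodG p c B g) (hv : Continuous v)
    (he : ∀ r ∈ Icc (0:ℝ) 1, v r = Tf g (psi α) m a v r) {x y C : ℝ} (hx : 0 ≤ x) (hxy : x ≤ y)
    (hy : y ≤ 1) (h : ∀ t ∈ Icc x y, C ≤ psi α (Wf g m v t)) : C * (y - x) ≤ v y - v x := by
  rw [he x ⟨hx, hxy.trans hy⟩, he y ⟨hx.trans hxy, hy⟩]
  have := int_lower ((psi_cont hα).comp (Wf_cont1 G.cont m hv)) hxy h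
  simp only [Function.comp_def] at this
  unfold Tf
  linarith

lemma P_cont (G : GoodG p c B g) (hv : Continuous v) : Continuous (fun t => t ^ m * g (v t)) := by
  have := G.cont
  fun_prop

lemma P_low (G : GoodG p c B g) (hv : Continuous v) {x y C : ℝ} (hxy : x ≤ y)
    (h : ∀ t ∈ Icc x y, C ≤ t ^ m * g (v t)) : C * (y - x) ≤ Pf g m v y - Pf g m v x :=
  int_lower (P_cont G hv) hxy h

lemma P_up (G : GoodG p c B g) (hv : Continuous v) {x y C : ℝ} (hxy : x ≤ y)
    (h : ∀ t ∈ Icc x y, t ^ m * g (v t) ≤ C) : Pf g m v y - Pf g m v x ≤ C * (y - x) :=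
  int_upper (P_cont G hv) hxy h

lemma P_zero : Pf g m v 0 = 0 := by simp [Pf]

lemma P_one : Pf g m v 1 = Wf g m v 1 := by
  rw [← Wf_Pf]; simp

lemma P_nonneg (hα : 0 < α) (ha : 0 < a) (G : GoodG p c B g) (hv : Continuous v)
    (he : ∀ r ∈ Icc (0:ℝ) 1, v r = Tf g (psi α) m a v r) (h1 : 0 ≤ Pf g m v 1)
    {r : ℝ} (hr : r ∈ Icc (0:ℝ) 1) : 0 ≤ Pf g m v r := by
  rcases le_total (v r) 1 with h | h
  · have := P_low (m := m) G hv (C := 0) hr.1 (fun t ht => by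
      have ht' : t ∈ Icc (0:ℝ) 1 := ⟨ht.1, ht.2.trans hr.2⟩
      refine mul_nonneg (pow_nonneg ht.1 m) (G.nonneg (ha.trans_le (sol_ge hα G hv he ht')) ?_)
      exact (sol_mono hα G hv he ht' hr ht.2).trans h)
    rw [P_zero] at this
    linarith
  · have := P_up (m := m) G hv (C := 0) hr.2 (fun t ht => by
      have ht' : t ∈ Icc (0:ℝ) 1 := ⟨hr.1.trans ht.1, ht.2⟩
      refine mul_nonpos_of_nonneg_of_nonpos (pow_nonneg ht'.1 m) (G.nonpos ?_)
      exact h.trans (sol_mono hα G hv he hr ht' ht.1))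
    linarith

lemma W_ge {r : ℝ} (hr : 0 < r) (hr1 : r ≤ 1) (hP : 0 ≤ Pf g m v r) : Pf g m v r ≤ Wf g m v r := by
  have h := Wf_Pf g m v r
  have hm : 0 < r ^ m := pow_pos hr m
  have hW : 0 ≤ Wf g m v r := by
    by_contra hc
    push Not at hc
    have := mul_neg_of_pos_of_neg hm hc
    linarith
  rw [← h]
  exact mul_le_of_le_one_left hW (pow_le_one₀ hr.le hr1)

lemma W_le (G : GoodG p c B g) (hv : Continuous v) {r C : ℝ} (hC : 0 ≤ C) (hr : r ∈ Icc (0:ℝ) 1)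
    (h : ∀ t ∈ Icc 0 r, g (v t) ≤ C) : Wf g m v r ≤ C := by
  unfold Wf
  have hc : Continuous (fun t => t ^ m * g (v (r * t))) := by
    have := G.cont
    fun_prop
  have := int_upper hc (zero_le_one (α := ℝ)) (C := C) (fun t ht => by
    calc t ^ m * g (v (r * t)) ≤ t ^ m * C :=
          mul_le_mul_of_nonneg_left (h _ ⟨mul_nonneg hr.1 ht.1, mul_le_of_le_one_right hr.1 ht.2⟩)
            (pow_nonneg ht.1 m)
      _ ≤ C := mul_le_of_le_one_left hC (pow_le_one₀ ht.1 ht.2))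
  simp only [intervalIntegral.integral_same, sub_zero, mul_one] at this
  calc r * _ ≤ r * C := mul_le_mul_of_nonneg_left this hr.1
    _ ≤ C := mul_le_of_le_one_left hC hr.2

lemma T_deriv (hα : 0 < α) (G : GoodG p c B g) (hv : Continuous v) (r : ℝ) :
    HasDerivAt (Tf g (psi α) m a v) (psi α (Wf g m v r)) r := by
  have hc := (psi_cont hα).comp (Wf_cont1 G.cont m hv)
  exact (hc.integral_hasStrictDerivAt 0 r).hasDerivAt.const_add a

lemma sign0 (hp : 2 < p) (hα : α = 1 / (p - 1)) (ha : a = Real.exp (-1) / 2)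
    (G : GoodG p c B g) (hv : Continuous v)
    (he : ∀ r ∈ Icc (0:ℝ) 1, v r = Tf g (psi α) m a v r) : 0 < Wf g m v 1 := by
  have hp1 : 0 < p - 1 := by linarith
  have hα0 : 0 < α := by rw [hα]; positivity
  have ha0 : 0 < a := by rw [ha]; positivity
  have hd : ∀ r ∈ Icc (0:ℝ) 1, psi α (Wf g m v r) ≤ v r := by
    intro r hr
    have hvr := ha0.trans_le (sol_ge hα0 G hv he hr)
    have hW : Wf g m v r ≤ (v r) ^ (p - 1) := by
      refine W_le G hv (Real.rpow_nonneg hvr.le _) hr fun t ht => ?_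
      have ht' : t ∈ Icc (0:ℝ) 1 := ⟨ht.1, ht.2.trans hr.2⟩
      have hvt := ha0.trans_le (sol_ge hα0 G hv he ht')
      exact (G.le_pow _ hvt.le).trans
        (Real.rpow_le_rpow hvt.le (sol_mono hα0 G hv he ht' hr ht.2) hp1.le)
    refine (psi_le hα0 (Real.rpow_nonneg hvr.le _) hW).trans ?_
    rw [← Real.rpow_mul hvr.le, hα, mul_one_div_cancel hp1.ne', Real.rpow_one]
  have hder : ∀ r, HasDerivAt (fun r => Tf g (psi α) m a v r * Real.exp (-r))
      (psi α (Wf g m v r) * Real.exp (-r) + Tf g (psi α) m a v r * (Real.exp (-r) * (-1))) r :=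
    fun r => (T_deriv hα0 G hv r).mul ((hasDerivAt_neg r).exp)
  have hanti : AntitoneOn (fun r => Tf g (psi α) m a v r * Real.exp (-r)) (Icc 0 1) := by
    refine antitoneOn_of_deriv_nonpos (convex_Icc 0 1)
      (fun r _ => (hder r).continuousAt.continuousWithinAt)
      (fun r _ => (hder r).differentiableAt.differentiableWithinAt) fun r hr => ?_
    rw [(hder r).deriv]
    rw [interior_Icc] at hr
    have hr' := Ioo_subset_Icc_self hr
    have := hd r hr'
    rw [he r hr'] at this
    nlinarith [Real.exp_pos (-r)]
  have h1 := hanti ⟨le_rfl, zero_le_one⟩ ⟨zero_le_one, le_rfl⟩ zero_le_one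
  simp only [Tf_zero, neg_zero, Real.exp_zero, mul_one] at h1
  rw [← he 1 ⟨zero_le_one, le_rfl⟩, ha] at h1
  have hv1 : v 1 < 1 := by
    have := Real.exp_pos (-1)
    nlinarith
  rw [← P_one]
  refine intervalIntegral.intervalIntegral_pos_of_pos_on
    ((P_cont G hv).intervalIntegrable _ _) (fun t ht => ?_) zero_lt_one
  have ht' := Ioo_subset_Icc_self ht
  refine mul_pos (pow_pos ht.1 m) (G.pos _ (ha0.trans_le (sol_ge hα0 G hv he ht')) ?_)
  exact (sol_mono hα0 G hv he ht' ⟨zero_le_one, le_rfl⟩ ht'.2).trans_lt hv1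

lemma small_pow (hα1 : α < 1) {κ : ℝ} (hκ : 0 < κ) :
    ∃ η > 0, ∀ x, 0 < x → x ≤ η → x < κ * x ^ α := by
  have h1 : 0 < 1 - α := by linarith
  refine ⟨(κ / 2) ^ (1 / (1 - α)), by positivity, fun x hx hxη => ?_⟩
  have h2 : x ^ (1 - α) ≤ κ / 2 := by
    calc x ^ (1 - α) ≤ ((κ / 2) ^ (1 / (1 - α))) ^ (1 - α) := Real.rpow_le_rpow hx.le hxη h1.le
      _ = κ / 2 := by
        rw [← Real.rpow_mul (by positivity), one_div_mul_cancel h1.ne', Real.rpow_one]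
  have h3 : x = x ^ (1 - α) * x ^ α := by
    rw [← Real.rpow_add hx]; simp
  have h4 : 0 < x ^ α := Real.rpow_pos_of_pos hx _
  nlinarith

lemma caseA (hα : 0 < α) (hc : 0 < c) (hc1 : c ≤ 1) (ha2 : 1 / 2 ≤ a) (ha1 : a < 1)
    (G : GoodG p c B g) (hv : Continuous v)
    (he : ∀ r ∈ Icc (0:ℝ) 1, v r = Tf g (psi α) m a v r) (h1 : 0 ≤ Pf g m v 1)
    (hlt : v (1 / 2) < 1) :
    (((1 / 8) ^ m * c / 8) ^ α / 4) * (1 - v (1 / 4)) ^ α ≤ 1 - v (1 / 4) := by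
  have hmono := sol_mono hα G hv he
  have ha0 : 0 < a := by linarith
  have m4 : (1 / 4 : ℝ) ∈ Icc (0:ℝ) 1 := by norm_num
  have m2 : (1 / 2 : ℝ) ∈ Icc (0:ℝ) 1 := by norm_num
  have m8 : (1 / 8 : ℝ) ∈ Icc (0:ℝ) 1 := by norm_num
  set δ := 1 - v (1 / 4) with hδ
  have h42 : v (1 / 4) ≤ v (1 / 2) := hmono m4 m2 (by norm_num)
  have hδ0 : 0 < δ := by linarith
  have hδ1 : δ ≤ 1 := by linarith [sol_ge hα G hv he m4]
  set κ := (1 / 8 : ℝ) ^ m * c / 8 with hκ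
  have hκ0 : 0 < κ := by positivity
  have hκ1 : κ ≤ 1 := by
    have : (1 / 8 : ℝ) ^ m ≤ 1 := pow_le_one₀ (by norm_num) (by norm_num)
    have : (1 / 8 : ℝ) ^ m * c ≤ 1 := mul_le_one₀ this hc.le hc1
    linarith
  have hz : κ * δ ≤ Pf g m v (1 / 4) := by
    have hl := P_low (m := m) G hv (x := 1 / 8) (y := 1 / 4) (C := (1 / 8) ^ m * (c * δ))
      (by norm_num) (fun t ht => by
        have ht' : t ∈ Icc (0:ℝ) 1 := ⟨by linarith [ht.1], by linarith [ht.2]⟩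
        have h1 : v t ≤ v (1 / 4) := hmono ht' m4 ht.2
        have h2 := G.low (v t) (ha2.trans (sol_ge hα G hv he ht')) (by linarith)
        have h3 : c * δ ≤ g (v t) := by nlinarith
        exact mul_le_mul (pow_le_pow_left₀ (by norm_num) ht.1 m) h3 (by positivity)
          (pow_nonneg ht'.1 m))
    have h8 := P_nonneg hα ha0 G hv he h1 m8
    rw [hκ]
    nlinarith
  have hW : ∀ t ∈ Icc (1 / 4 : ℝ) (1 / 2), (κ * δ) ^ α ≤ psi α (Wf g m v t) := by
    intro t ht
    have ht' : t ∈ Icc (0:ℝ) 1 := ⟨by linarith [ht.1], by linarith [ht.2]⟩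
    have h2 := P_low (m := m) G hv (C := 0) ht.1 (fun s hs => by
      have hs' : s ∈ Icc (0:ℝ) 1 := ⟨by linarith [hs.1], by linarith [hs.2, ht.2]⟩
      refine mul_nonneg (pow_nonneg hs'.1 m) (G.nonneg (ha0.trans_le (sol_ge hα G hv he hs')) ?_)
      exact (hmono hs' m2 (hs.2.trans ht.2)).trans hlt.le)
    have h3 := W_ge (g := g) (m := m) (v := v) (r := t) (by linarith [ht.1]) ht'.2
      (P_nonneg hα ha0 G hv he h1 ht')
    rw [← psi_eq (α := α) (by positivity) (mul_le_one₀ hκ1 hδ0.le hδ1)]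
    exact psi_mono hα (by linarith)
  have := sol_grow hα G hv he (by norm_num) (by norm_num) (by norm_num) hW
  rw [Real.mul_rpow hκ0.le hδ0.le] at this
  linarith

lemma caseB (hα : 0 < α) (hc : 0 < c) (ha0 : 0 < a) (ha1 : a < 1)
    (G : GoodG p c B g) (hv : Continuous v)
    (he : ∀ r ∈ Icc (0:ℝ) 1, v r = Tf g (psi α) m a v r) (h1 : 0 ≤ Pf g m v 1)
    (hge : 1 ≤ v (1 / 2)) {η : ℝ} (hη : 0 ≤ η) (hgη : ∀ x ∈ Icc a 1, g x ≤ η) :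
    ∃ w, 0 < w ∧ w ≤ η ∧ ((1 / 16) * (3 / 4) ^ m * c * (1 / 4) ^ α) * w ^ α ≤ w := by
  have hmono := sol_mono hα G hv he
  have m0 : (0 : ℝ) ∈ Icc (0:ℝ) 1 := by norm_num
  have m2 : (1 / 2 : ℝ) ∈ Icc (0:ℝ) 1 := by norm_num
  have m1 : (1 : ℝ) ∈ Icc (0:ℝ) 1 := by norm_num
  have m34 : (3 / 4 : ℝ) ∈ Icc (0:ℝ) 1 := by norm_num
  obtain ⟨ρ, hρ, hvρ⟩ := intermediate_value_Icc (show (0:ℝ) ≤ 1 / 2 by norm_num) hv.continuousOn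
    (show (1:ℝ) ∈ Icc (v 0) (v (1 / 2)) from ⟨by rw [sol_zero he]; exact ha1.le, hge⟩)
  have hρ' : ρ ∈ Icc (0:ℝ) 1 := ⟨hρ.1, by linarith [hρ.2]⟩
  have hρ0 : 0 < ρ := by
    rcases hρ.1.lt_or_eq with h | h
    · exact h
    · exfalso
      rw [← h, sol_zero he] at hvρ
      linarith
  have hw0 : 0 < Pf g m v ρ := by
    -- the integrand is nonnegative and positive somewhere
    have hn : ∀ t ∈ Icc (0:ℝ) ρ, 0 ≤ t ^ m * g (v t) := fun t ht => by
      have ht' : t ∈ Icc (0:ℝ) 1 := ⟨ht.1, ht.2.trans hρ'.2⟩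
      refine mul_nonneg (pow_nonneg ht'.1 m) (G.nonneg (ha0.trans_le (sol_ge hα G hv he ht')) ?_)
      rw [← hvρ]; exact hmono ht' hρ' ht.2
    refine intervalIntegral.integral_pos hρ0 (P_cont G hv).continuousOn
      (fun t ht => hn t (Ioc_subset_Icc_self ht)) ?_
    obtain ⟨s, hs, hvs⟩ := intermediate_value_Icc hρ.1 hv.continuousOn
      (show (a + 1) / 2 ∈ Icc (v 0) (v ρ) by
        rw [sol_zero he, hvρ]; constructor <;> linarith)
    refine ⟨s, hs, mul_pos (pow_pos ?_ m) (G.pos _ ?_ ?_)⟩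
    · rcases hs.1.lt_or_eq with h | h
      · exact h
      · exfalso
        rw [← h, sol_zero he] at hvs
        linarith
    · rw [hvs]; linarith
    · rw [hvs]; linarith
  set w := Pf g m v ρ with hw
  have hwη : w ≤ η := by
    have := P_up (m := m) G hv (C := η) hρ.1 (fun t ht => by
      have ht' : t ∈ Icc (0:ℝ) 1 := ⟨ht.1, ht.2.trans hρ'.2⟩
      have h2 : v t ≤ 1 := by rw [← hvρ]; exact hmono ht' hρ' ht.2
      have h3 := hgη (v t) ⟨sol_ge hα G hv he ht', h2⟩
      have h4 : 0 ≤ g (v t) := G.nonneg (ha0.trans_le (sol_ge hα G hv he ht')) h2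
      exact (mul_le_of_le_one_left h4 (pow_le_one₀ ht'.1 ht'.2)).trans h3)
    rw [P_zero] at this
    nlinarith [hρ'.2]
  have hw1 : w ≤ 1 := by
    have := P_up (m := m) G hv (C := 1) hρ.1 (fun t ht => by
      have ht' : t ∈ Icc (0:ℝ) 1 := ⟨ht.1, ht.2.trans hρ'.2⟩
      have h2 : v t ≤ 1 := by rw [← hvρ]; exact hmono ht' hρ' ht.2
      have h3 := G.le_one (v t)
      have h4 : 0 ≤ g (v t) := G.nonneg (ha0.trans_le (sol_ge hα G hv he ht')) h2
      exact (mul_le_of_le_one_left h4 (pow_le_one₀ ht'.1 ht'.2)).trans h3)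
    rw [P_zero] at this
    linarith [hρ'.2]
  have hge1 : ∀ t ∈ Icc ρ 1, 1 ≤ v t := fun t ht => by
    rw [← hvρ]; exact hmono hρ' ⟨hρ.1.trans ht.1, ht.2⟩ ht.1
  have hPanti : ∀ x y, ρ ≤ x → x ≤ y → y ≤ 1 → Pf g m v y ≤ Pf g m v x := by
    intro x y hx hxy hy
    have := P_up (m := m) G hv (C := 0) hxy (fun t ht => by
      refine mul_nonpos_of_nonneg_of_nonpos (pow_nonneg (by linarith [ht.1]) m) (G.nonpos ?_)
      exact hge1 t ⟨hx.trans ht.1, ht.2.trans hy⟩)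
    linarith
  set D := (3 / 4 : ℝ) ^ m * (- g (v (3 / 4))) with hD
  have hg34 : g (v (3 / 4)) ≤ 0 := G.nonpos (hge1 _ ⟨by linarith [hρ.2], by norm_num⟩)
  have hD0 : 0 ≤ D := mul_nonneg (by positivity) (by linarith)
  have hρ34 : ρ ≤ 3 / 4 := by linarith [hρ.2]
  have hA : -D * (3 / 4 - ρ) ≤ Pf g m v (3 / 4) - w := by
    refine P_low (m := m) G hv hρ34 (fun t ht => ?_)
    have ht' : t ∈ Icc (0:ℝ) 1 := ⟨by linarith [ht.1], by linarith [ht.2]⟩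
    have h2 : g (v (3 / 4)) ≤ g (v t) :=
      G.anti (hge1 t ⟨ht.1, ht'.2⟩) (hge1 _ ⟨hρ34, by norm_num⟩) (hmono ht' m34 ht.2)
    have h3 : g (v t) ≤ 0 := G.nonpos (hge1 t ⟨ht.1, ht'.2⟩)
    have h4 : t ^ m ≤ (3 / 4 : ℝ) ^ m := pow_le_pow_left₀ ht'.1 ht.2 m
    have h5 : (0:ℝ) ≤ t ^ m := pow_nonneg ht'.1 m
    rw [hD]
    have h6 : t ^ m * (- g (v t)) ≤ (3 / 4 : ℝ) ^ m * (- g (v (3 / 4))) :=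
      mul_le_mul h4 (by linarith) (by linarith) (by positivity)
    linarith
  have hB' : Pf g m v 1 - Pf g m v (3 / 4) ≤ -D * (1 - 3 / 4) := by
    refine P_up (m := m) G hv (by norm_num) (fun t ht => ?_)
    have ht' : t ∈ Icc (0:ℝ) 1 := ⟨by linarith [ht.1], by linarith [ht.2]⟩
    have h2 : g (v t) ≤ g (v (3 / 4)) :=
      G.anti (hge1 _ ⟨hρ34, by norm_num⟩) (hge1 t ⟨hρ34.trans ht.1, ht'.2⟩)
        (hmono m34 ht' ht.1)
    have h4 : (3 / 4 : ℝ) ^ m ≤ t ^ m := pow_le_pow_left₀ (by norm_num) ht.1 m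
    rw [hD]
    have h6 : (3 / 4 : ℝ) ^ m * (- g (v (3 / 4))) ≤ t ^ m * (- g (v t)) :=
      mul_le_mul h4 (by linarith) (by linarith) (pow_nonneg ht'.1 m)
    linarith
  have hP34 : w / 4 ≤ Pf g m v (3 / 4) := by nlinarith [hρ.1]
  have hgrow : ∀ t ∈ Icc (1 / 2 : ℝ) (3 / 4), (w / 4) ^ α ≤ psi α (Wf g m v t) := by
    intro t ht
    have ht' : t ∈ Icc (0:ℝ) 1 := ⟨by linarith [ht.1], by linarith [ht.2]⟩
    have h2 := hPanti t (3 / 4) (hρ.2.trans ht.1) ht.2 (by norm_num)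
    have h3 := W_ge (g := g) (m := m) (v := v) (r := t) (by linarith [ht.1]) ht'.2
      (P_nonneg hα ha0 G hv he h1 ht')
    rw [← psi_eq (α := α) (by positivity) (by linarith)]
    exact psi_mono hα (by linarith)
  have hv34 := sol_grow hα G hv he (by norm_num) (by norm_num) (by norm_num) hgrow
  have hup := G.up (v (3 / 4)) (hge1 _ ⟨hρ34, by norm_num⟩)
    (by linarith [sol_le hα G hv he m34])
  have hPw := hPanti ρ (3 / 4) le_rfl hρ34 (by norm_num)
  refine ⟨w, hw0, hwη, ?_⟩
  have e1 : (w / 4) ^ α = (1 / 4) ^ α * w ^ α := by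
    rw [← Real.mul_rpow (by norm_num) hw0.le]; congr 1; ring
  rw [e1] at hv34
  have h7 : c * ((1 / 4) ^ α * w ^ α * (1 / 4)) ≤ - g (v (3 / 4)) := by
    have : c * ((1 / 4) ^ α * w ^ α * (1 / 4)) ≤ c * (v (3 / 4) - 1) :=
      mul_le_mul_of_nonneg_left (by linarith) hc.le
    linarith
  have h8 : (3 / 4 : ℝ) ^ m * (c * ((1 / 4) ^ α * w ^ α * (1 / 4))) ≤ D :=
    mul_le_mul_of_nonneg_left h7 (by positivity)
  have h9 : D / 4 ≤ w := by linarith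
  linarith

end sol

lemma sign1 {p c B α : ℝ} {g : ℝ → ℝ} {m : ℕ} (hα : 0 < α) (hα1 : α < 1) (hc : 0 < c) (hc1 : c ≤ 1)
    (G : GoodG p c B g) : ∃ a, 1 / 2 ≤ a ∧ a < 1 ∧ ∀ v, Continuous v →
      (∀ r ∈ Icc (0:ℝ) 1, v r = Tf g (psi α) m a v r) → Wf g m v 1 < 0 := by
  obtain ⟨η1, hη1, H1⟩ := small_pow hα1 (κ := ((1 / 8) ^ m * c / 8) ^ α / 4) (by positivity)
  obtain ⟨η2, hη2, H2⟩ := small_pow hα1 (κ := (1 / 16) * (3 / 4) ^ m * c * (1 / 4) ^ α)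
    (by positivity)
  have hev : ∀ᶠ x in 𝓝 (1:ℝ), g x < η2 := by
    have := G.cont.tendsto 1
    rw [G.one] at this
    exact this.eventually (gt_mem_nhds hη2)
  obtain ⟨ε, hε, hb⟩ := Metric.eventually_nhds_iff.1 hev
  let d := min (min (ε / 2) η1) (1 / 2)
  have hd1 : d ≤ ε / 2 := (min_le_left _ _).trans (min_le_left _ _)
  have hd2 : d ≤ η1 := (min_le_left _ _).trans (min_le_right _ _)
  have hd3 : d ≤ 1 / 2 := min_le_right _ _
  have hd0 : 0 < d := by positivity
  refine ⟨1 - d, by linarith, by linarith, fun v hv he => ?_⟩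
  by_contra hcon
  push Not at hcon
  rw [← P_one] at hcon
  rcases lt_or_ge (v (1 / 2)) 1 with h | h
  · have := caseA hα hc hc1 (by linarith) (by linarith) G hv he hcon h
    have h4 : v (1 / 4) ≤ v (1 / 2) :=
      sol_mono hα G hv he (by norm_num) (by norm_num) (by norm_num)
    have h5 := sol_ge hα G hv he (r := 1 / 4) (by norm_num)
    have := H1 (1 - v (1 / 4)) (by linarith) (by linarith)
    linarith
  · obtain ⟨w, hw0, hwη, hw⟩ := caseB hα hc (by linarith) (by linarith) G hv he hcon h hη2.le
      (fun x hx => (hb (by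
        rw [Real.dist_eq, abs_lt]; constructor <;> linarith [hx.1, hx.2])).le)
    have := H2 w hw0 hwη
    linarith

lemma exists_good {p q : ℝ} (hp : 2 < p) (hq : p < q) : ∃ c B : ℝ, ∃ g : ℝ → ℝ, 0 < c ∧ c ≤ 1 ∧
    GoodG p c B g ∧ ∀ x ∈ Icc (0:ℝ) 2, g x = x ^ (p - 1) - x ^ (q - 1) := by
  have hp1 : 0 < p - 1 := by linarith
  have hq1 : 0 < q - 1 := by linarith
  have hk : 0 < q - p := by linarith
  let f : ℝ → ℝ := fun x => x ^ (p - 1) - x ^ (q - 1)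
  have hf : Continuous f :=
    (Real.continuous_rpow_const hp1.le).sub (Real.continuous_rpow_const hq1.le)
  have hff : ∀ x, 0 < x → f x = x ^ (p - 1) * (1 - x ^ (q - p)) := by
    intro x hx
    have : x ^ (q - 1) = x ^ (p - 1) * x ^ (q - p) := by
      rw [← Real.rpow_add hx]; congr 1; ring
    simp only [f, this]; ring
  obtain ⟨B, hB⟩ := (isCompact_Icc (a := (0:ℝ)) (b := 2)).exists_bound_of_continuousOn
    hf.continuousOn
  let κ := (1 / 2 : ℝ) ^ (p - 1) * ((q - p) / (1 + (q - p)))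
  let c := min (min κ ((q - p) / 2)) 1
  have hc : 0 < c := by positivity
  have hcκ : c ≤ κ := (min_le_left _ _).trans (min_le_left _ _)
  have hcq : c ≤ (q - p) / 2 := (min_le_left _ _).trans (min_le_right _ _)
  let P : ℝ → ℝ := fun x => max 0 (min x 2)
  have hP : ∀ x, P x ∈ Icc (0:ℝ) 2 := fun x =>
    ⟨le_max_left _ _, max_le (by norm_num) (min_le_right _ _)⟩
  have hPe : ∀ x ∈ Icc (0:ℝ) 2, P x = x := fun x hx => by
    simp only [P]; rw [min_eq_left hx.2, max_eq_right hx.1]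
  have hPle : ∀ x, 0 ≤ x → P x ≤ x := fun x hx => max_le hx (min_le_left _ _)
  have hPm : Monotone P := fun x y h => max_le_max le_rfl (min_le_min h le_rfl)
  have hfpow : ∀ x, 0 ≤ x → f x ≤ x ^ (p - 1) := fun x hx => by
    have := Real.rpow_nonneg hx (q - 1)
    simp only [f]; linarith
  have hf1 : ∀ x, 1 ≤ x → f x ≤ 0 := fun x hx => by
    have := Real.rpow_le_rpow_of_exponent_le hx (show p - 1 ≤ q - 1 by linarith)
    simp only [f]; linarith
  refine ⟨c, B, fun x => f (P x), hc, min_le_right _ _, ?_, fun x hx => by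
    show f (P x) = _
    rw [hPe x hx]⟩
  refine ⟨by fun_prop, fun x => hB _ (hP x), fun x => ?_, fun x h0 h1 => ?_, ?_, ?_,
    fun x hx => ?_, fun x h0 h1 => ?_, fun x h0 h1 => ?_⟩
  · rcases le_total (P x) 1 with h | h
    · exact (hfpow _ (hP x).1).trans (Real.rpow_le_one (hP x).1 h hp1.le)
    · exact (hf1 _ h).trans zero_le_one
  · rw [hPe x ⟨h0.le, by linarith⟩, hff x h0]
    have := Real.rpow_lt_one h0.le h1 hk
    exact mul_pos (Real.rpow_pos_of_pos h0 _) (by linarith)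
  · rw [hPe 1 (by norm_num)]
    simp [f]
  · intro x hx y hy hxy
    have hx1 : 1 ≤ P x := by
      rw [← hPe 1 (by norm_num)]; exact hPm hx
    have hxy' := hPm hxy
    have hy1 := hx1.trans hxy'
    simp only
    rw [hff _ (by linarith), hff _ (by linarith)]
    have e1 := Real.rpow_le_rpow (by linarith) hxy' hp1.le
    have e2 := Real.rpow_le_rpow (by linarith) hxy' hk.le
    have e3 := Real.one_le_rpow hx1 hk.le
    have e4 : 0 ≤ (P x) ^ (p - 1) := Real.rpow_nonneg (by linarith) _
    nlinarith [mul_le_mul e1 (show P x ^ (q - p) - 1 ≤ P y ^ (q - p) - 1 by linarith)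
      (by linarith) (e4.trans e1)]
  · exact (hfpow _ (hP x).1).trans (Real.rpow_le_rpow (hP x).1 (hPle x hx) hp1.le)
  · have hx0 : 0 < x := by linarith
    rw [hPe x ⟨by linarith, by linarith⟩, hff x hx0]
    have e1 : (1 / 2 : ℝ) ^ (p - 1) ≤ x ^ (p - 1) := Real.rpow_le_rpow (by norm_num) h0 hp1.le
    have e2 : (q - p) / (1 + (q - p)) * (1 - x) ≤ 1 - x ^ (q - p) := by
      have l1 : Real.log x ≤ x - 1 := Real.log_le_sub_one_of_pos hx0
      set y := (q - p) * (1 - x) with hy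
      have hy0 : 0 ≤ y := mul_nonneg hk.le (by linarith)
      have l2 : x ^ (q - p) ≤ Real.exp (-y) := by
        rw [Real.rpow_def_of_pos hx0]
        apply Real.exp_le_exp.2
        rw [hy]; nlinarith
      have l3 : Real.exp (-y) * (1 + y) ≤ 1 := by
        have := Real.add_one_le_exp y
        calc Real.exp (-y) * (1 + y) ≤ Real.exp (-y) * Real.exp y :=
              mul_le_mul_of_nonneg_left (by linarith) (Real.exp_pos _).le
          _ = 1 := by rw [← Real.exp_add]; simp
      have l4 : Real.exp (-y) ≤ 1 / (1 + y) := by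
        rw [le_div_iff₀ (by linarith)]; exact l3
      have l5 : (q - p) / (1 + (q - p)) * (1 - x) ≤ y / (1 + y) := by
        rw [div_mul_eq_mul_div]
        apply div_le_div_of_nonneg_left hy0 (by linarith)
        rw [hy]; nlinarith
      have l6 : y / (1 + y) = 1 - 1 / (1 + y) := by
        have : 1 + y ≠ 0 := by linarith
        field_simp
        ring
      linarith
    calc c * (1 - x) ≤ κ * (1 - x) := mul_le_mul_of_nonneg_right hcκ (by linarith)
      _ = (1 / 2 : ℝ) ^ (p - 1) * ((q - p) / (1 + (q - p)) * (1 - x)) := by simp only [κ]; ring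
      _ ≤ _ := mul_le_mul e1 e2 (mul_nonneg (by positivity) (by linarith))
          (Real.rpow_nonneg hx0.le _)
  · have hx0 : 0 < x := by linarith
    rw [hPe x ⟨by linarith, by linarith⟩, hff x hx0]
    have e1 : 1 ≤ x ^ (p - 1) := Real.one_le_rpow h0 hp1.le
    have e2 : (q - p) / 2 * (x - 1) ≤ x ^ (q - p) - 1 := by
      have l1 : 1 - x⁻¹ ≤ Real.log x := Real.one_sub_inv_le_log_of_pos hx0
      have l2 : (x - 1) / 2 ≤ 1 - x⁻¹ := by
        have : 1 - x⁻¹ = (x - 1) / x := by field_simp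
        rw [this]
        exact div_le_div_of_nonneg_left (by linarith) hx0 h1
      have l3 : Real.log x * (q - p) + 1 ≤ x ^ (q - p) := by
        rw [Real.rpow_def_of_pos hx0]
        exact Real.add_one_le_exp _
      nlinarith
    have e3 : c * (x - 1) ≤ (q - p) / 2 * (x - 1) :=
      mul_le_mul_of_nonneg_right hcq (by linarith)
    have e4 : 0 ≤ c * (x - 1) := mul_nonneg hc.le (by linarith)
    nlinarith

theorem stmt_2 (p : ℝ) (hp : 2 < p) (N : ℕ) (hN : 1 ≤ N) (q : ℝ) (hq : p < q) :
    ∃ u u' : ℝ → ℝ,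
      IsRadialNeumannSolution p N (fun s => s ^ (q - 1)) u u' ∧
      (∀ r ∈ Icc (0:ℝ) 1, 0 < u r) ∧
      MonotoneOn u (Icc (0:ℝ) 1) ∧
      ¬ (∀ r ∈ Icc (0:ℝ) 1, u r = u 0) := by
  obtain ⟨c, B, g, hc, hc1, G, hg⟩ := exists_good hp hq
  have hp1 : 0 < p - 1 := by linarith
  obtain ⟨α, hα⟩ : ∃ α, α = 1 / (p - 1) := ⟨_, rfl⟩
  have hα0 : 0 < α := by rw [hα]; positivity
  have hα1 : α < 1 := by rw [hα, div_lt_one hp1]; linarith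
  obtain ⟨m, hm⟩ : ∃ m, m = N - 1 := ⟨_, rfl⟩
  obtain ⟨a1, ha12, ha11, H1⟩ := sign1 (m := m) hα0 hα1 hc hc1 G
  have hexp : Real.exp (-1) ≤ 1 := Real.exp_le_one_iff.2 (by norm_num)
  have hexp0 := Real.exp_pos (-1)
  obtain ⟨a, ha, v, hv, he, hW⟩ := shooting G.cont G.bdd (psi_cont hα0) (psi_nonneg α)
    (psi_le_one hα0) m (a0 := Real.exp (-1) / 2) (a1 := a1) (by positivity) (by linarith)
    ha11.le (fun v hv he => sign0 hp hα rfl G hv he) H1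
  have ha0 : 0 < a := by linarith [ha.1]
  have ha1 : a < 1 := by linarith [ha.2]
  have hP1 : Pf g m v 1 = 0 := by rw [P_one, hW]
  have hmem : ∀ r ∈ Icc (0:ℝ) 1, v r ∈ Icc (0:ℝ) 2 := fun r hr =>
    ⟨ha0.le.trans (sol_ge hα0 G hv he hr), (sol_le hα0 G hv he hr).trans (by linarith)⟩
  have hpsi0 : psi α 0 = 0 := by
    rw [psi_eq le_rfl zero_le_one, Real.zero_rpow hα0.ne']
  refine ⟨Tf g (psi α) m a v, fun r => psi α (Wf g m v r), ⟨?_, ?_, ?_, ?_, ?_⟩, ?_, ?_, ?_⟩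
  · exact fun r _ => (T_deriv hα0 G hv r).hasDerivWithinAt
  · exact ((psi_cont hα0).comp (Wf_cont1 G.cont m hv)).continuousOn
  · have : Wf g m v 0 = 0 := by simp [Wf]
    simp only [this, hpsi0]
  · simp only [hW, hpsi0]
  · intro r hr
    have hr' := Ioo_subset_Icc_self hr
    have hd : HasDerivAt (Pf g m v) (r ^ m * g (v r)) r :=
      ((P_cont G hv).integral_hasStrictDerivAt 0 r).hasDerivAt
    rw [hg _ (hmem r hr'), he r hr'] at hd
    rw [← hm]
    refine hd.congr_of_eventuallyEq ?_
    filter_upwards [Ioo_mem_nhds hr.1 hr.2] with s hs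
    have hs' := Ioo_subset_Icc_self hs
    have hPs := P_nonneg hα0 ha0 G hv he hP1.ge hs'
    have hWs := hPs.trans (W_ge hs.1 hs.2.le hPs)
    have hWs1 : Wf g m v s ≤ 1 := W_le G hv zero_le_one hs' (fun t _ => G.le_one _)
    unfold flux
    beta_reduce
    rw [← Wf_Pf, ← hm, abs_of_nonneg (psi_nonneg _ _), psi_eq hWs hWs1]
    congr 1
    rcases hWs.eq_or_lt with h | h
    · rw [← h, Real.zero_rpow hα0.ne', mul_zero]
    · have hpos := Real.rpow_pos_of_pos h α
      nth_rewrite 2 [← Real.rpow_one (Wf g m v s ^ α)]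
      rw [← Real.rpow_add hpos, ← Real.rpow_mul h.le, hα]
      have : 1 / (p - 1) * (p - 2 + 1) = 1 := by field_simp; ring
      rw [this, Real.rpow_one]
  · intro r hr
    rw [← he r hr]
    exact ha0.trans_le (sol_ge hα0 G hv he hr)
  · exact (Tf_mono G.cont (psi_cont hα0) (psi_nonneg α) m a hv).monotoneOn _
  · intro hcon
    rw [Tf_zero] at hcon
    have hva : ∀ r ∈ Icc (0:ℝ) 1, v r = a := fun r hr => (he r hr).trans (hcon r hr)
    have : 0 < Pf g m v 1 := by
      refine intervalIntegral.intervalIntegral_pos_of_pos_on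
        ((P_cont G hv).intervalIntegrable _ _) (fun t ht => ?_) zero_lt_one
      rw [hva t (Ioo_subset_Icc_self ht)]
      exact mul_pos (pow_pos ht.1 m) (G.pos a ha0 ha1)
    linarith
end

section
/- For every integer N ≥ 1 there exists a constant C > 0, depending only on N, with the following property: for every p > 2 and every function u of class C^1 on the closed unit ball B̄ ⊂ ℝ^N which is radial (u(x) depends only on |x|), nonnegative, and radially nondecreasing (u(x) ≤ u(y) whenever |x| ≤ |y|), one has sup_{x ∈ B̄} u(x) ≤ C (∫_B (|∇u(x)|^p + |u(x)|^p) dx)^{1/p}, where the integral is with respect to Lebesgue measure on the open unit ball B. -/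
open Real Filter Set MeasureTheory

theorem aux_avg (N : ℕ) (hN : 1 ≤ N) (u : EuclideanSpace ℝ (Fin N) → ℝ)
    (hu : ContDiffOn ℝ 1 u (Metric.closedBall 0 1))
    (hrad : ∀ x y : EuclideanSpace ℝ (Fin N), x ∈ Metric.closedBall 0 1 →
          y ∈ Metric.closedBall 0 1 → ‖x‖ = ‖y‖ → u x = u y)
    (hpos : ∀ x ∈ Metric.closedBall (0 : EuclideanSpace ℝ (Fin N)) 1, 0 ≤ u x)
    (hD : ContinuousOn (fderivWithin ℝ u (Metric.closedBall 0 1)) (Metric.closedBall 0 1))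
    (e : EuclideanSpace ℝ (Fin N)) (he : ‖e‖ = 1) :
    volume.real (Metric.ball (0 : EuclideanSpace ℝ (Fin N)) 1) * u e ≤
      ∫ y in Metric.ball (0 : EuclideanSpace ℝ (Fin N)) 1,
        (‖fderivWithin ℝ u (Metric.closedBall 0 1) y‖ + |u y|) := by
  set Du := fderivWithin ℝ u (Metric.closedBall 0 1) with hDu
  let f : ℝ → ℝ := fun r => u (r • e)
  let f' : ℝ → ℝ := fun r => Du (r • e) e
  let k : ℝ → ℝ := fun r => f r + |f' r|
  have hmem : MapsTo (fun r : ℝ => r • e) (Icc 0 1) (Metric.closedBall 0 1) := by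
    intro r hr
    simp [norm_smul, he, abs_of_nonneg hr.1, hr.2]
  have hcs : ContinuousOn (fun r : ℝ => r • e) (Icc 0 1) := by fun_prop
  have hfc : ContinuousOn f (Icc 0 1) := hu.continuousOn.comp hcs hmem
  have hf'c : ContinuousOn f' (Icc 0 1) := (hD.comp hcs hmem).clm_apply continuousOn_const
  have hkc : ContinuousOn k (Icc 0 1) := hfc.add hf'c.abs
  have hfd : ∀ y ∈ Metric.ball (0 : EuclideanSpace ℝ (Fin N)) 1, HasFDerivAt u (Du y) y := by
    intro y hy
    have hn : Metric.closedBall (0 : EuclideanSpace ℝ (Fin N)) 1 ∈ nhds y :=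
      mem_of_superset (Metric.isOpen_ball.mem_nhds hy) Metric.ball_subset_closedBall
    have h1 := hu.differentiableOn (by simp) y (Metric.ball_subset_closedBall hy)
    exact h1.hasFDerivWithinAt.hasFDerivAt hn
  have hline : ∀ v : EuclideanSpace ℝ (Fin N), ‖v‖ = 1 → ∀ r ∈ Ioo (0:ℝ) 1,
      HasDerivAt (fun r : ℝ => u (r • v)) (Du (r • v) v) r := by
    intro v hv r hr
    have hb : r • v ∈ Metric.ball (0 : EuclideanSpace ℝ (Fin N)) 1 := by
      simp [norm_smul, hv, abs_of_pos hr.1, hr.2]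
    have h2 : HasDerivAt (fun r : ℝ => r • v) v r := by
      simpa using (hasDerivAt_id r).smul_const v
    exact (hfd _ hb).comp_hasDerivAt r h2
  have hder : ∀ y ∈ Metric.ball (0 : EuclideanSpace ℝ (Fin N)) 1, |f' ‖y‖| ≤ ‖Du y‖ := by
    intro y hy
    by_cases h0 : y = 0
    · subst h0
      have := (Du 0).le_opNorm e
      simpa [f', he] using this
    have hyp : 0 < ‖y‖ := norm_pos_iff.2 h0
    have hy1 : ‖y‖ < 1 := by simpa using hy
    set v := ‖y‖⁻¹ • y with hv
    have hvn : ‖v‖ = 1 := by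
      rw [hv, norm_smul, norm_inv, norm_norm, inv_mul_cancel₀ hyp.ne']
    have hvy : ‖y‖ • v = y := by rw [hv, smul_inv_smul₀ hyp.ne']
    have a1 := hline v hvn ‖y‖ ⟨hyp, hy1⟩
    have a2 := hline e he ‖y‖ ⟨hyp, hy1⟩
    have heq : (fun r : ℝ => u (r • v)) =ᶠ[nhds ‖y‖] (fun r : ℝ => u (r • e)) := by
      filter_upwards [Ioo_mem_nhds hyp hy1] with r hr
      apply hrad
      · simp [norm_smul, hvn, abs_of_pos hr.1, hr.2.le]
      · simp [norm_smul, he, abs_of_pos hr.1, hr.2.le]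
      · simp [norm_smul, he, hvn]
    have a3 := a1.unique (a2.congr_of_eventuallyEq heq)
    rw [hvy] at a3
    have := (Du y).le_opNorm v
    rw [a3, hvn, mul_one] at this
    exact this
  have hNpos : (1:ℝ) ≤ N := by exact_mod_cast hN
  -- FTC
  have hDc : ContinuousOn (fun r : ℝ => (N : ℝ) * r ^ (N-1) * f r + r ^ N * f' r) (Icc 0 1) := by
    fun_prop
  have hKc : ContinuousOn (fun r : ℝ => (N : ℝ) * (r ^ (N-1) * k r)) (Icc 0 1) := by
    fun_prop
  have hftc : ∫ r in (0:ℝ)..1, ((N : ℝ) * r ^ (N-1) * f r + r ^ N * f' r) = u e := by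
    rw [intervalIntegral.integral_eq_sub_of_hasDerivAt_of_le (f := fun r => r ^ N * f r) zero_le_one]
    · have : N ≠ 0 := by omega
      simp [f, this]
    · fun_prop
    · intro r hr
      exact (hasDerivAt_pow N r).mul (hline e he r hr)
    · exact hDc.intervalIntegrable_of_Icc zero_le_one
  have hle : u e ≤ ∫ r in (0:ℝ)..1, (N : ℝ) * (r ^ (N-1) * k r) := by
    rw [← hftc]
    apply intervalIntegral.integral_mono_on zero_le_one
      (hDc.intervalIntegrable_of_Icc zero_le_one) (hKc.intervalIntegrable_of_Icc zero_le_one)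
    intro r hr
    have hp1 : 0 ≤ r ^ (N-1) := pow_nonneg hr.1 _
    have hp2 : r ^ N ≤ r ^ (N-1) := pow_le_pow_of_le_one hr.1 hr.2 (by omega)
    have hp3 : 0 ≤ r ^ N := pow_nonneg hr.1 _
    have h1 : r ^ N * f' r ≤ r ^ (N-1) * |f' r| :=
      (mul_le_mul_of_nonneg_left (le_abs_self _) hp3).trans
          (mul_le_mul_of_nonneg_right hp2 (abs_nonneg _))
    have h2 : r ^ (N-1) * |f' r| ≤ N * (r ^ (N-1) * |f' r|) :=
      le_mul_of_one_le_left (by positivity) hNpos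
    simp only [k]
    nlinarith
  -- polar coordinates
  haveI : Nonempty (Fin N) := ⟨⟨0, hN⟩⟩
  have hpolar := integral_fun_norm_addHaar (volume : Measure (EuclideanSpace ℝ (Fin N)))
    ((Iio (1:ℝ)).indicator k)
  have hL : ∫ x : EuclideanSpace ℝ (Fin N), (Iio (1:ℝ)).indicator k ‖x‖ =
      ∫ x in Metric.ball (0 : EuclideanSpace ℝ (Fin N)) 1, k ‖x‖ := by
    rw [← integral_indicator measurableSet_ball]
    congr 1
    ext x
    simp [indicator]
  have hR : ∫ y in Ioi (0:ℝ), y ^ (N-1) • (Iio (1:ℝ)).indicator k y =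
      ∫ r in (0:ℝ)..1, r ^ (N-1) * k r := by
    rw [intervalIntegral.integral_of_le zero_le_one, integral_Ioc_eq_integral_Ioo,
      ← integral_indicator measurableSet_Ioi, ← integral_indicator measurableSet_Ioo]
    congr 1
    ext x
    by_cases h1 : 0 < x <;> by_cases h2 : x < 1 <;> simp [indicator, h1, h2]
  rw [hL, finrank_euclideanSpace_fin, hR] at hpolar
  have hki : IntegrableOn (fun x : EuclideanSpace ℝ (Fin N) => k ‖x‖) (Metric.ball 0 1) := by
    have : ContinuousOn (fun x : EuclideanSpace ℝ (Fin N) => k ‖x‖) (Metric.closedBall 0 1) :=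
      hkc.comp continuous_norm.continuousOn (fun x hx => ⟨norm_nonneg _, by simpa using hx⟩)
    exact (this.integrableOn_compact (isCompact_closedBall _ _)).mono_set
      Metric.ball_subset_closedBall
  have hgi : IntegrableOn (fun x : EuclideanSpace ℝ (Fin N) => ‖Du x‖ + |u x|)
      (Metric.ball 0 1) := by
    have : ContinuousOn (fun x : EuclideanSpace ℝ (Fin N) => ‖Du x‖ + |u x|)
      (Metric.closedBall 0 1) := hD.norm.add hu.continuousOn.abs
    exact (this.integrableOn_compact (isCompact_closedBall _ _)).mono_set
      Metric.ball_subset_closedBall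
  have hfin : ∫ x in Metric.ball (0 : EuclideanSpace ℝ (Fin N)) 1, k ‖x‖ ≤
      ∫ y in Metric.ball (0 : EuclideanSpace ℝ (Fin N)) 1, (‖Du y‖ + |u y|) := by
    apply setIntegral_mono_on hki hgi measurableSet_ball
    intro x hx
    have hx1 : ‖x‖ < 1 := by simpa using hx
    have h1 : f ‖x‖ = u x := by
      apply hrad
      · simp [norm_smul, he, hx1.le]
      · simp [hx1.le]
      · simp [norm_smul, he]
    have h2 := hder x hx
    have h3 := le_abs_self (u x)
    simp only [k]
    linarith
  refine le_trans ?_ hfin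
  rw [hpolar]
  rw [intervalIntegral.integral_const_mul] at hle
  simp only [nsmul_eq_mul, smul_eq_mul]
  calc _ ≤ volume.real (Metric.ball (0 : EuclideanSpace ℝ (Fin N)) 1) * _ :=
        mul_le_mul_of_nonneg_left hle measureReal_nonneg
    _ = _ := by ring

theorem stmt_3 (N : ℕ) (hN : 1 ≤ N) :
    ∃ C : ℝ, 0 < C ∧ ∀ p : ℝ, 2 < p →
      ∀ u : EuclideanSpace ℝ (Fin N) → ℝ,
        ContDiffOn ℝ 1 u (Metric.closedBall 0 1) →
        (∀ x y : EuclideanSpace ℝ (Fin N), x ∈ Metric.closedBall 0 1 →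
          y ∈ Metric.closedBall 0 1 → ‖x‖ = ‖y‖ → u x = u y) →
        (∀ x ∈ Metric.closedBall (0 : EuclideanSpace ℝ (Fin N)) 1, 0 ≤ u x) →
        (∀ x y : EuclideanSpace ℝ (Fin N), x ∈ Metric.closedBall 0 1 →
          y ∈ Metric.closedBall 0 1 → ‖x‖ ≤ ‖y‖ → u x ≤ u y) →
        ∀ x ∈ Metric.closedBall (0 : EuclideanSpace ℝ (Fin N)) 1,
          u x ≤ C * (∫ y in Metric.ball (0 : EuclideanSpace ℝ (Fin N)) 1,
            (‖fderivWithin ℝ u (Metric.closedBall 0 1) y‖ ^ p + |u y| ^ p)) ^ (1 / p) := by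
  set ω := volume.real (Metric.ball (0 : EuclideanSpace ℝ (Fin N)) 1) with hω
  have hωpos : 0 < ω := by
    rw [hω, measureReal_def]
    exact ENNReal.toReal_pos (Metric.measure_ball_pos _ _ one_pos).ne' measure_ball_lt_top.ne
  refine ⟨2 * (1 + ω⁻¹), by positivity, ?_⟩
  intro p hp u hu hrad hpos hmono x hx
  have hp0 : 0 < p := by linarith
  have hU : UniqueDiffOn ℝ (Metric.closedBall (0 : EuclideanSpace ℝ (Fin N)) 1) := by
    apply uniqueDiffOn_convex (convex_closedBall _ _)
    exact ⟨0, Metric.ball_subset_interior_closedBall (by simp)⟩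
  have hD := hu.continuousOn_fderivWithin hU le_rfl
  let e : EuclideanSpace ℝ (Fin N) := EuclideanSpace.single ⟨0, hN⟩ 1
  have he : ‖e‖ = 1 := by simp [e]
  have hemem : e ∈ Metric.closedBall (0 : EuclideanSpace ℝ (Fin N)) 1 := by simp [he]
  have hxe : u x ≤ u e := hmono x e hx hemem (by rw [he]; simpa using hx)
  have havg := aux_avg N hN u hu hrad hpos hD e he
  rw [← hω] at havg
  set Du := fderivWithin ℝ u (Metric.closedBall 0 1) with hDu
  set I := ∫ y in Metric.ball (0 : EuclideanSpace ℝ (Fin N)) 1, (‖Du y‖ ^ p + |u y| ^ p) with hI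
  have hint : ∀ g : EuclideanSpace ℝ (Fin N) → ℝ, ContinuousOn g (Metric.closedBall 0 1) →
      IntegrableOn g (Metric.ball 0 1) := fun g hg =>
    (hg.integrableOn_compact (isCompact_closedBall _ _)).mono_set Metric.ball_subset_closedBall
  have hg : ContinuousOn (fun y => ‖Du y‖ + |u y|) (Metric.closedBall 0 1) :=
    hD.norm.add hu.continuousOn.abs
  have hgp : ContinuousOn (fun y => (‖Du y‖ + |u y|) ^ p) (Metric.closedBall 0 1) :=
    hg.rpow_const (fun _ _ => Or.inr hp0.le)
  have hsp : ContinuousOn (fun y => ‖Du y‖ ^ p + |u y| ^ p) (Metric.closedBall 0 1) :=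
    (hD.norm.rpow_const (fun _ _ => Or.inr hp0.le)).add
      (hu.continuousOn.abs.rpow_const (fun _ _ => Or.inr hp0.le))
  have hJ := (convexOn_rpow (p := p) (by linarith)).map_set_average_le
    (μ := volume) (t := Metric.ball (0 : EuclideanSpace ℝ (Fin N)) 1)
    (f := fun y => ‖Du y‖ + |u y|)
    (continuousOn_id.rpow_const (fun _ _ => Or.inr hp0.le)) isClosed_Ici
    (Metric.measure_ball_pos _ _ one_pos).ne' measure_ball_lt_top.ne
    (Eventually.of_forall fun y => by simp only [mem_Ici]; positivity) (hint _ hg) (hint _ hgp)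
  rw [setAverage_eq, setAverage_eq, ← hω, smul_eq_mul, smul_eq_mul] at hJ
  have h2 : ∫ y in Metric.ball (0 : EuclideanSpace ℝ (Fin N)) 1, (‖Du y‖ + |u y|) ^ p ≤
      2 ^ p * I := by
    rw [hI, ← integral_const_mul]
    apply setIntegral_mono_on (hint _ hgp) (hint _ (continuousOn_const.mul hsp)) measurableSet_ball
    intro y _
    have key : ∀ a b : ℝ, 0 ≤ a → 0 ≤ b → (a + b) ^ p ≤ 2 ^ p * (a ^ p + b ^ p) := by
      intro a b ha hb
      rcases le_total a b with h | h
      · calc (a + b) ^ p ≤ (2 * b) ^ p := by gcongr; linarith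
          _ = 2 ^ p * b ^ p := Real.mul_rpow (by norm_num) hb
          _ ≤ _ := by gcongr; linarith [Real.rpow_nonneg ha p]
      · calc (a + b) ^ p ≤ (2 * a) ^ p := by gcongr; linarith
          _ = 2 ^ p * a ^ p := Real.mul_rpow (by norm_num) ha
          _ ≤ _ := by gcongr; linarith [Real.rpow_nonneg hb p]
    exact key _ _ (norm_nonneg _) (abs_nonneg _)
  have hI0 : 0 ≤ I := integral_nonneg fun y => by positivity
  have hM0 : 0 ≤ u e := hpos e hemem
  have hM : u e ≤ ω⁻¹ * ∫ y in Metric.ball (0 : EuclideanSpace ℝ (Fin N)) 1, (‖Du y‖ + |u y|) := by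
    rw [le_inv_mul_iff₀ hωpos]; exact havg
  have hMp : (u e) ^ p ≤ ω⁻¹ * (2 ^ p * I) :=
    (Real.rpow_le_rpow hM0 hM hp0.le).trans (hJ.trans (by gcongr))
  have hω1 : (ω⁻¹) ^ (1 / p) ≤ 1 + ω⁻¹ := by
    have hi : 0 < ω⁻¹ := inv_pos.2 hωpos
    calc (ω⁻¹) ^ (1 / p) ≤ (1 + ω⁻¹) ^ (1 / p) := by gcongr; linarith
      _ ≤ (1 + ω⁻¹) ^ (1:ℝ) := by
        apply Real.rpow_le_rpow_of_exponent_le (by linarith)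
        rw [div_le_one hp0]; linarith
      _ = _ := Real.rpow_one _
  calc u x ≤ u e := hxe
    _ = ((u e) ^ p) ^ (1 / p) := by
      rw [← Real.rpow_mul hM0, mul_one_div_cancel hp0.ne', Real.rpow_one]
    _ ≤ (ω⁻¹ * (2 ^ p * I)) ^ (1 / p) := by gcongr
    _ = (ω⁻¹) ^ (1 / p) * (2 * I ^ (1 / p)) := by
      rw [Real.mul_rpow (by positivity) (by positivity), Real.mul_rpow (by positivity) hI0,
        ← Real.rpow_mul (by norm_num), mul_one_div_cancel hp0.ne', Real.rpow_one]
    _ ≤ (1 + ω⁻¹) * (2 * I ^ (1 / p)) := by gcongr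
    _ = _ := by ring
end

section
/- Let p > 2, let N ≥ 1 be an integer, and let f ∈ C^1([0,∞)) satisfy (f0), (f1), (f2), (f3). Then there exists a constant K_∞ > 0 such that every nonnegative, nondecreasing radial profile solution u ∈ C^1([0,1]) of the Neumann problem −Δ_p u + u^{p−1} = f(u) in the unit ball of ℝ^N satisfies max_{r ∈ [0,1]} u(r) ≤ K_∞. -/
open Real Filter Set

theorem stmt_4 (p : ℝ) (hp : 2 < p) (N : ℕ) (hN : 1 ≤ N) (f f' : ℝ → ℝ)
    (hC1 : ∀ s ∈ Ici (0:ℝ), HasDerivWithinAt f (f' s) (Ici 0) s)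
    (hC1' : ContinuousOn f' (Ici 0))
    (hf0 : ∀ s ∈ Ici (0:ℝ), 0 ≤ f s ∧ 0 ≤ f' s)
    (hf1 : ∃ L ∈ Ico (0:ℝ) 1,
      Tendsto (fun s => f s / s ^ (p - 1)) (nhdsWithin 0 (Ioi 0)) (nhds L))
    (hf2 : ∃ a : ℝ, 1 < a ∧ ∀ᶠ s in atTop, a ≤ f s / s ^ (p - 1))
    (hf3 : ∃ u₀ : ℝ, 0 < u₀ ∧ f u₀ = u₀ ^ (p - 1) ∧ (p - 1) * u₀ ^ (p - 2) < f' u₀) :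
    ∃ K : ℝ, 0 < K ∧ ∀ u u' : ℝ → ℝ,
      IsRadialNeumannSolution p N f u u' →
      (∀ r ∈ Icc (0:ℝ) 1, 0 ≤ u r) →
      MonotoneOn u (Icc (0:ℝ) 1) →
      ∀ r ∈ Icc (0:ℝ) 1, u r ≤ K := by
  obtain ⟨a, ha, hev⟩ := hf2
  obtain ⟨t, ht⟩ := eventually_atTop.1 hev
  set S : ℝ := max t 1 with hS
  have hS1 : (1:ℝ) ≤ S := le_max_right _ _
  have hSpos : 0 < S := by linarith
  have hbig : ∀ s, S ≤ s → s ^ (p - 1) - f s < 0 := by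
    intro s hs
    have h1 := ht s (le_trans (le_max_left _ _) hs)
    have hpos : 0 < s ^ (p - 1) := Real.rpow_pos_of_pos (by linarith) _
    rw [le_div_iff₀ hpos] at h1
    nlinarith
  have hM : 0 < S ^ (p - 1) := Real.rpow_pos_of_pos hSpos _
  have hall : ∀ s, 0 ≤ s → s ^ (p - 1) - f s ≤ S ^ (p - 1) := by
    intro s hs
    rcases le_total S s with h | h
    · linarith [hbig s h]
    · have := Real.rpow_le_rpow hs h (by linarith : 0 ≤ p - 1)
      linarith [(hf0 s hs).1]
  refine ⟨2 * S, by linarith, ?_⟩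
  rintro u u' ⟨hu, hu'c, hu0, hu1, hflux⟩ hnn hmono
  have hucont : ContinuousOn u (Icc 0 1) := fun r hr => (hu r hr).continuousWithinAt
  have huat : ∀ r ∈ Ioo (0:ℝ) 1, HasDerivAt u (u' r) r := fun r hr =>
    (hu r (Ioo_subset_Icc_self hr)).hasDerivAt (Icc_mem_nhds hr.1 hr.2)
  have hu'nn : ∀ r ∈ Ioo (0:ℝ) 1, 0 ≤ u' r := by
    intro r hr
    have h1 := hu r (Ioo_subset_Icc_self hr)
    have h2 : derivWithin u (Icc 0 1) r = u' r :=
      h1.derivWithin (uniqueDiffOn_Icc zero_lt_one r (Ioo_subset_Icc_self hr))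
    rw [← h2]
    exact hmono.derivWithin_nonneg
  have hwc : ContinuousOn (flux p N u') (Icc 0 1) := by
    unfold flux
    refine (continuousOn_id.pow _).mul (ContinuousOn.mul ?_ hu'c)
    exact hu'c.abs.rpow_const (fun x _ => Or.inr (by linarith))
  have hw0 : flux p N u' 0 = 0 := by simp [flux, hu0]
  have hw1 : flux p N u' 1 = 0 := by simp [flux, hu1]
  have h0le : u 0 ≤ S := by
    by_contra! hlt
    have hanti : StrictAntiOn (flux p N u') (Icc 0 1) := by
      refine strictAntiOn_of_deriv_neg (convex_Icc 0 1) hwc ?_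
      intro r hr
      rw [interior_Icc] at hr
      rw [(hflux r hr).deriv]
      refine mul_neg_of_pos_of_neg (pow_pos hr.1 _) (hbig _ ?_)
      have := hmono (left_mem_Icc.2 zero_le_one) (Ioo_subset_Icc_self hr) hr.1.le
      linarith
    have := hanti (left_mem_Icc.2 zero_le_one) (right_mem_Icc.2 zero_le_one) zero_lt_one
    linarith
  have hder : ∀ r ∈ Ioo (0:ℝ) 1, u' r ≤ S := by
    intro r hr
    have hsub : Icc 0 r ⊆ Icc (0:ℝ) 1 := Icc_subset_Icc le_rfl hr.2.le
    have hio : ∀ x ∈ Ioo 0 r, x ∈ Ioo (0:ℝ) 1 := fun x hx => ⟨hx.1, hx.2.trans hr.2⟩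
    have key := (convex_Icc 0 r).image_sub_le_mul_sub_of_deriv_le (f := flux p N u')
      (C := r ^ (N - 1) * S ^ (p - 1)) (hwc.mono hsub)
      (by
        intro x hx
        rw [interior_Icc] at hx
        exact (hflux x (hio x hx)).differentiableAt.differentiableWithinAt)
      (by
        intro x hx
        rw [interior_Icc] at hx
        rw [(hflux x (hio x hx)).deriv]
        have e1 := hall (u x) (hnn x (Ioo_subset_Icc_self (hio x hx)))
        have e2 : x ^ (N - 1) ≤ r ^ (N - 1) := pow_le_pow_left₀ hx.1.le hx.2.le _
        have e3 : 0 ≤ x ^ (N - 1) := pow_nonneg hx.1.le _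
        calc _ ≤ x ^ (N - 1) * S ^ (p - 1) := mul_le_mul_of_nonneg_left e1 e3
          _ ≤ _ := mul_le_mul_of_nonneg_right e2 hM.le)
      0 (left_mem_Icc.2 hr.1.le) r (right_mem_Icc.2 hr.1.le) hr.1.le
    rw [hw0, sub_zero, sub_zero] at key
    by_contra! hlt
    have hupos : 0 < u' r := by linarith
    have e4 : |u' r| ^ (p - 2) * u' r = u' r ^ (p - 1) := by
      rw [abs_of_pos hupos, ← Real.rpow_add_one hupos.ne']
      congr 1; ring
    have e5 : S ^ (p - 1) < u' r ^ (p - 1) := Real.rpow_lt_rpow hSpos.le hlt (by linarith)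
    have hrp : 0 < r ^ (N - 1) := pow_pos hr.1 _
    unfold flux at key
    rw [e4, mul_assoc] at key
    have e6 := le_of_mul_le_mul_left key hrp
    nlinarith [hr.2]
  intro r hr
  have key := (convex_Icc (0:ℝ) 1).image_sub_le_mul_sub_of_deriv_le (f := u)
    (C := S) hucont
    (by
      intro x hx
      rw [interior_Icc] at hx
      exact (huat x hx).differentiableAt.differentiableWithinAt)
    (by
      intro x hx
      rw [interior_Icc] at hx
      rw [(huat x hx).deriv]
      exact hder x hx)
    0 (left_mem_Icc.2 zero_le_one) r hr hr.1
  nlinarith [hr.2]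
end

section
/- Let p > 2, let N ≥ 1 be an integer, and set p* := Np/(N−p) if p < N and p* := +∞ otherwise. Let f ∈ C^1([0,∞)) satisfy (f0), (f1), (f2), and (f3) at some u_0 > 0, and let K_∞ ≥ u_0 be a positive constant. Then for every ℓ with p < ℓ < p* there exists a function f̃ ∈ C^1([0,∞)) such that: f̃(s) ≥ 0 and f̃'(s) ≥ 0 for all s ≥ 0; lim_{s→0^+} f̃(s)/s^{p−1} exists and belongs to [0,1); liminf_{s→+∞} f̃(s)/s^{p−1} > 1; f̃(u_0) = u_0^{p−1} and f̃'(u_0) > (p−1)u_0^{p−2}; lim_{s→+∞} f̃(s)/s^{ℓ−1} = 1; and f̃(s) = f(s) for all s ∈ [0, K_∞]. -/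
open Real Filter Set

theorem stmt_5 (p : ℝ) (hp : 2 < p) (N : ℕ) (hN : 1 ≤ N) (f f' : ℝ → ℝ)
    (hC1 : ∀ s ∈ Ici (0:ℝ), HasDerivWithinAt f (f' s) (Ici 0) s)
    (hC1' : ContinuousOn f' (Ici 0))
    (hf0 : ∀ s ∈ Ici (0:ℝ), 0 ≤ f s ∧ 0 ≤ f' s)
    (hf1 : ∃ L ∈ Ico (0:ℝ) 1,
      Tendsto (fun s => f s / s ^ (p - 1)) (nhdsWithin 0 (Ioi 0)) (nhds L))
    (hf2 : ∃ a : ℝ, 1 < a ∧ ∀ᶠ s in atTop, a ≤ f s / s ^ (p - 1))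
    (u₀ : ℝ) (hu₀ : 0 < u₀)
    (hf3 : f u₀ = u₀ ^ (p - 1) ∧ (p - 1) * u₀ ^ (p - 2) < f' u₀)
    (K : ℝ) (hK : u₀ ≤ K)
    (ℓ : ℝ) (hℓ : p < ℓ) (hℓsub : p < (N : ℝ) → ℓ < (N : ℝ) * p / ((N : ℝ) - p)) :
    ∃ ft ft' : ℝ → ℝ,
      (∀ s ∈ Ici (0:ℝ), HasDerivWithinAt ft (ft' s) (Ici 0) s) ∧
      ContinuousOn ft' (Ici 0) ∧
      (∀ s ∈ Ici (0:ℝ), 0 ≤ ft s ∧ 0 ≤ ft' s) ∧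
      (∃ L ∈ Ico (0:ℝ) 1,
        Tendsto (fun s => ft s / s ^ (p - 1)) (nhdsWithin 0 (Ioi 0)) (nhds L)) ∧
      (∃ a : ℝ, 1 < a ∧ ∀ᶠ s in atTop, a ≤ ft s / s ^ (p - 1)) ∧
      ft u₀ = u₀ ^ (p - 1) ∧ (p - 1) * u₀ ^ (p - 2) < ft' u₀ ∧
      Tendsto (fun s => ft s / s ^ (ℓ - 1)) atTop (nhds 1) ∧
      ∀ s ∈ Icc (0:ℝ) K, ft s = f s := by
  obtain ⟨L, hL, hLt⟩ := hf1
  have hK0 : 0 < K := lt_of_lt_of_le hu₀ hK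
  have hcK := hf0 K hK0.le
  set g : ℝ → ℝ := fun s => f K + f' K * (s - K) + (s - K) ^ (ℓ - 1) with hg
  set g' : ℝ → ℝ := fun s => f' K + (ℓ - 1) * (s - K) ^ (ℓ - 2) with hg'
  have hgK : g K = f K := by
    simp only [hg, sub_self, mul_zero, add_zero]
    rw [Real.zero_rpow (by linarith)]; ring
  have hgK' : g' K = f' K := by
    simp only [hg', sub_self]
    rw [Real.zero_rpow (by linarith)]; ring
  have hgd : ∀ s, HasDerivAt g (g' s) s := by
    intro s
    have h1 : HasDerivAt (fun s : ℝ => s - K) 1 s := (hasDerivAt_id s).sub_const K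
    have h2 := h1.rpow_const (p := ℓ - 1) (Or.inr (by linarith))
    have h3 := ((h1.const_mul (f' K)).const_add (f K)).add h2
    refine h3.congr_deriv ?_
    simp only [hg']
    rw [show ℓ - 1 - 1 = ℓ - 2 by ring]; ring
  have hgc : Continuous g' := by
    have : Continuous (fun s : ℝ => (s - K) ^ (ℓ - 2)) :=
      (continuous_id.sub continuous_const).rpow_const (fun _ => Or.inr (by linarith))
    exact continuous_const.add (continuous_const.mul this)
  have hlim : Tendsto (fun s => g s / s ^ (ℓ - 1)) atTop (nhds 1) := by
    have hinv : Tendsto (fun s : ℝ => s⁻¹) atTop (nhds 0) := tendsto_inv_atTop_zero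
    have e1 : Tendsto (fun s : ℝ => s ^ (-(ℓ - 1))) atTop (nhds 0) :=
      tendsto_rpow_neg_atTop (by linarith)
    have e2 : Tendsto (fun s : ℝ => s ^ (-(ℓ - 2))) atTop (nhds 0) :=
      tendsto_rpow_neg_atTop (by linarith)
    have e3 : Tendsto (fun s : ℝ => 1 - K * s⁻¹) atTop (nhds 1) := by
      simpa using (hinv.const_mul K).const_sub 1
    have e4 : Tendsto (fun s : ℝ => (1 - K * s⁻¹) ^ (ℓ - 1)) atTop (nhds 1) := by
      simpa using e3.rpow_const (p := ℓ - 1) (Or.inl one_ne_zero)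
    have e5 := ((e1.const_mul (f K)).add ((e2.const_mul (f' K)).mul e3)).add e4
    simp only [mul_zero, zero_mul, zero_add] at e5
    refine e5.congr' ?_
    filter_upwards [eventually_gt_atTop K] with s hs
    have hs0 : 0 < s := hK0.trans hs
    have q1 : 1 - K * s⁻¹ = (s - K) / s := by field_simp
    have q2 : s ^ (-(ℓ - 2)) = s * s ^ (-(ℓ - 1)) := by
      rw [show -(ℓ - 2) = 1 + -(ℓ - 1) by ring, Real.rpow_add hs0, Real.rpow_one]
    have hne : s ^ (ℓ - 1) ≠ 0 := (Real.rpow_pos_of_pos hs0 _).ne'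
    rw [q1, q2, Real.div_rpow (by linarith) hs0.le, Real.rpow_neg hs0.le]
    simp only [hg]
    field_simp
  set ft : ℝ → ℝ := fun s => if s ≤ K then f s else g s with hft
  set ft' : ℝ → ℝ := fun s => if s ≤ K then f' s else g' s with hft'
  have hle : ∀ s, s ≤ K → ft s = f s := fun s hs => by simp [hft, hs]
  have hle' : ∀ s, s ≤ K → ft' s = f' s := fun s hs => by simp [hft', hs]
  have hge : ∀ s, K ≤ s → ft s = g s := fun s hs => by
    rcases hs.eq_or_lt with rfl | h
    · rw [hle _ le_rfl, hgK]
    · simp [hft, not_le.2 h]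
  have hge' : ∀ s, K ≤ s → ft' s = g' s := fun s hs => by
    rcases hs.eq_or_lt with rfl | h
    · rw [hle' _ le_rfl, hgK']
    · simp [hft', not_le.2 h]
  have hev : ft =ᶠ[atTop] g := by
    filter_upwards [eventually_ge_atTop K] with s hs using hge s hs
  have hlimt : Tendsto (fun s => ft s / s ^ (ℓ - 1)) atTop (nhds 1) := by
    refine hlim.congr' ?_
    filter_upwards [hev] with s hs
    rw [hs]
  refine ⟨ft, ft', ?_, ?_, ?_, ⟨L, hL, ?_⟩, ⟨2, by norm_num, ?_⟩, ?_, ?_, hlimt,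
    fun s hs => hle s hs.2⟩
  · intro s hs
    rcases lt_trichotomy s K with h | h | h
    · rw [hle' s h.le]
      refine (hC1 s hs).congr_of_eventuallyEq ?_ (hle s h.le)
      filter_upwards [mem_nhdsWithin_of_mem_nhds (Iio_mem_nhds h)] with t ht using hle t ht.le
    · subst h
      have a1 : HasDerivWithinAt ft (ft' s) (Icc 0 s) s := by
        rw [hle' s le_rfl]
        exact ((hC1 s hs).mono Icc_subset_Ici_self).congr (fun t ht => hle t ht.2) (hle s le_rfl)
      have a2 : HasDerivWithinAt ft (ft' s) (Ici s) s := by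
        rw [hge' s le_rfl]
        exact (hgd s).hasDerivWithinAt.congr (fun t ht => hge t ht) (hge s le_rfl)
      have := a1.union a2
      rwa [Icc_union_Ici_eq_Ici hK0.le] at this
    · rw [hge' s h.le]
      refine (hgd s).hasDerivWithinAt.congr_of_eventuallyEq ?_ (hge s h.le)
      filter_upwards [mem_nhdsWithin_of_mem_nhds (Ioi_mem_nhds h)] with t ht
        using hge t (le_of_lt ht)
  · rw [← Icc_union_Ici_eq_Ici hK0.le]
    refine ContinuousOn.union_of_isClosed ?_ ?_ isClosed_Icc isClosed_Ici
    · exact (hC1'.mono Icc_subset_Ici_self).congr (fun t ht => hle' t ht.2)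
    · exact hgc.continuousOn.congr (fun t ht => hge' t ht)
  · intro s hs
    rcases le_total s K with h | h
    · rw [hle s h, hle' s h]; exact hf0 s hs
    · rw [hge s h, hge' s h]
      have h0 : 0 ≤ s - K := by linarith
      have h1 : 0 ≤ ℓ - 1 := by linarith
      obtain ⟨b1, b2⟩ := hcK
      have r1 := Real.rpow_nonneg h0 (ℓ - 1)
      have r2 := Real.rpow_nonneg h0 (ℓ - 2)
      constructor
      · simp only [hg]; positivity
      · simp only [hg']; positivity
  · refine hLt.congr' ?_
    filter_upwards [mem_nhdsWithin_of_mem_nhds (Iio_mem_nhds hK0)] with t ht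
    rw [hle t (le_of_lt ht)]
  · have t1 : Tendsto (fun s : ℝ => s ^ (ℓ - p)) atTop atTop :=
      tendsto_rpow_atTop (by linarith)
    have t2 := hlimt.pos_mul_atTop one_pos t1
    filter_upwards [t2.eventually_ge_atTop 2, eventually_gt_atTop 0] with s h2 hs0
    refine h2.trans_eq ?_
    have : s ^ (ℓ - 1) = s ^ (ℓ - p) * s ^ (p - 1) := by
      rw [← Real.rpow_add hs0]; congr 1; ring
    have n1 : s ^ (ℓ - p) ≠ 0 := (Real.rpow_pos_of_pos hs0 _).ne'
    have n2 : s ^ (p - 1) ≠ 0 := (Real.rpow_pos_of_pos hs0 _).ne'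
    rw [this]
    generalize s ^ (ℓ - p) = A at *
    generalize s ^ (p - 1) = B at *
    field_simp
  · rw [hle _ hK]; exact hf3.1
  · rw [hle' _ hK]; exact hf3.2
end

section
/- Let p > 2 and let N ≥ 1 be an integer. There exists a constant C > 0 such that for every real q ≥ p + 1 and every radial profile solution u ∈ C^1([0,1]) of the Neumann problem −Δ_p u + u^{p−1} = u^{q−1} in the unit ball of ℝ^N with u(r) > 0 for all r ∈ [0,1], u nondecreasing, and u not constant, one has max_{r ∈ [0,1]} u(r) + max_{r ∈ [0,1]} |u'(r)| ≤ C. In particular the bound is uniform in q. -/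
open Real Filter Set

lemma aux_w (p : ℝ) (hp : 2 < p) (x : ℝ) (hx : 0 ≤ x) : |x| ^ (p - 2) * x = x ^ (p - 1) := by
  rw [abs_of_nonneg hx, ← Real.rpow_add_one' hx (by linarith)]
  congr 1; ring

theorem stmt_13 (p : ℝ) (hp : 2 < p) (N : ℕ) (hN : 1 ≤ N) :
    ∃ C : ℝ, 0 < C ∧ ∀ q : ℝ, p + 1 ≤ q → ∀ u u' : ℝ → ℝ,
      IsRadialNeumannSolution p N (fun s => s ^ (q - 1)) u u' →
      (∀ r ∈ Icc (0:ℝ) 1, 0 < u r) →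
      MonotoneOn u (Icc (0:ℝ) 1) →
      ¬ (∀ r ∈ Icc (0:ℝ) 1, u r = u 0) →
      ∀ r ∈ Icc (0:ℝ) 1, ∀ s ∈ Icc (0:ℝ) 1, u r + |u' s| ≤ C := by
  refine ⟨2 * exp (1 / p), by positivity, ?_⟩
  intro q hq u u' ⟨hd, hc, h0, h1, hf⟩ hpos hmono _ r hr s hs
  have m0 : (0:ℝ) ∈ Icc (0:ℝ) 1 := by simp
  have m1 : (1:ℝ) ∈ Icc (0:ℝ) 1 := by simp
  have hu'nn : ∀ x ∈ Icc (0:ℝ) 1, 0 ≤ u' x := by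
    intro x hx
    have := hmono.derivWithin_nonneg (x := x)
    rwa [(hd x hx).derivWithin (uniqueDiffOn_Icc zero_lt_one x hx)] at this
  have huc : ContinuousOn u (Icc 0 1) := fun x hx => (hd x hx).continuousWithinAt
  have hwc : ContinuousOn (fun s => |u' s| ^ (p - 2) * u' s) (Icc 0 1) :=
    (hc.abs.rpow_const (fun x _ => Or.inr (by linarith))).mul hc
  have hfc : ContinuousOn (flux p N u') (Icc 0 1) :=
    (continuous_id.pow (N - 1)).continuousOn.mul hwc
  -- u 0 ≤ 1
  have hu0 : u 0 ≤ 1 := by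
    by_contra! hlt
    have hanti : StrictAntiOn (flux p N u') (Icc 0 1) := by
      apply strictAntiOn_of_deriv_neg (convex_Icc 0 1) hfc
      intro x hx
      rw [interior_Icc] at hx
      have hx' := Ioo_subset_Icc_self hx
      rw [(hf x hx).deriv]
      have h1x : 1 < u x := hlt.trans_le (hmono m0 hx' hx'.1)
      apply mul_neg_of_pos_of_neg (pow_pos hx.1 _)
      have := Real.rpow_lt_rpow_of_exponent_lt h1x (show p - 1 < q - 1 by linarith)
      simpa using this
    have := hanti m0 m1 zero_lt_one
    simp [flux, h0, h1] at this
  set w : ℝ → ℝ := fun s => |u' s| ^ (p - 2) * u' s with hw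
  set E : ℝ → ℝ := fun s => (p - 1) / p * (w s) ^ (p / (p - 1)) + (u s ^ q / q - u s ^ p / p) with hE
  have hwe : ∀ x ∈ Icc (0:ℝ) 1, w x = u' x ^ (p - 1) := fun x hx => aux_w p hp _ (hu'nn x hx)
  have hwp : ∀ x ∈ Icc (0:ℝ) 1, w x ^ (p / (p - 1)) = u' x ^ p := by
    intro x hx
    rw [hwe x hx, ← Real.rpow_mul (hu'nn x hx)]
    congr 1
    have : p - 1 ≠ 0 := by linarith
    field_simp
  have hwq : ∀ x ∈ Icc (0:ℝ) 1, w x ^ (p / (p - 1) - 1) = u' x := by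
    intro x hx
    rw [hwe x hx, ← Real.rpow_mul (hu'nn x hx)]
    have : p - 1 ≠ 0 := by linarith
    have e : (p - 1) * (p / (p - 1) - 1) = 1 := by field_simp; ring
    rw [e, Real.rpow_one]
  have hEc : ContinuousOn E (Icc 0 1) := by
    have hpp : 0 ≤ p / (p - 1) := div_nonneg (by linarith) (by linarith)
    refine (continuousOn_const.mul (hwc.rpow_const (fun x _ => Or.inr hpp))).add ?_
    exact ((huc.rpow_const (fun x _ => Or.inr (by linarith))).div_const _).sub
      ((huc.rpow_const (fun x _ => Or.inr (by linarith))).div_const _)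
  have hEd : ∀ x ∈ Ioo (0:ℝ) 1, ∃ d, HasDerivAt E d x ∧ d ≤ 0 := by
    intro x hx
    have hx' := Ioo_subset_Icc_self hx
    have hux := hpos x hx'
    have hdu : HasDerivAt u (u' x) x := (hd x hx').hasDerivAt (Icc_mem_nhds hx.1 hx.2)
    have hxp : 0 < x ^ (N - 1) := pow_pos hx.1 _
    have hdw := (hf x hx).div (hasDerivAt_pow (N - 1) x) hxp.ne'
    have hev : (fun s => flux p N u' s / s ^ (N - 1)) =ᶠ[nhds x] w := by
      filter_upwards [Ioi_mem_nhds hx.1] with y hy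
      have : y ^ (N - 1) ≠ 0 := (pow_pos hy _).ne'
      simp only [flux, hw]
      field_simp
    have hdw2 := HasDerivAt.congr_of_eventuallyEq hdw hev.symm
    have hwx : 0 ≤ w x := by rw [hwe x hx']; exact Real.rpow_nonneg (hu'nn x hx') _
    have hge : 1 ≤ p / (p - 1) := by rw [le_div_iff₀ (by linarith)]; linarith
    have A := (hdw2.rpow_const (p := p / (p - 1)) (Or.inr hge)).const_mul ((p - 1) / p)
    have B := ((hdu.rpow_const (p := q) (Or.inl hux.ne')).div_const q).sub
      ((hdu.rpow_const (p := p) (Or.inl hux.ne')).div_const p)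
    refine ⟨_, A.add B, ?_⟩
    rw [hwq x hx']
    have hfl : flux p N u' x = x ^ (N - 1) * w x := rfl
    rw [hfl]
    have hp1 : p - 1 ≠ 0 := by linarith
    have hp0 : p ≠ 0 := by linarith
    have hq0 : q ≠ 0 := by linarith
    have key : 0 ≤ u' x * (w x * (↑(N - 1) * x ^ (N - 1 - 1)) / x ^ (N - 1)) := by
      have := hu'nn x hx'
      have := hx.1.le
      positivity
    refine le_of_eq_of_le ?_ (neg_nonpos.mpr key)
    have hxn := hxp.ne'
    field_simp
    ring
  have hEa : AntitoneOn E (Icc 0 1) := by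
    apply antitoneOn_of_deriv_nonpos (convex_Icc 0 1) hEc
    · intro x hx
      rw [interior_Icc] at hx
      obtain ⟨d, h, _⟩ := hEd x hx
      exact h.differentiableAt.differentiableWithinAt
    · intro x hx
      rw [interior_Icc] at hx
      obtain ⟨d, h, h'⟩ := hEd x hx
      rwa [h.deriv]
  have hE0 : E 0 ≤ 0 := by
    have h0p := hpos 0 m0
    simp only [hE]
    rw [hwp 0 m0, h0, Real.zero_rpow (by linarith)]
    have a := Real.rpow_le_rpow_of_exponent_ge h0p hu0 (show p ≤ q by linarith)
    have b : u 0 ^ q / q ≤ u 0 ^ p / p :=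
      div_le_div₀ (Real.rpow_nonneg h0p.le _) a (by linarith) (by linarith)
    linarith
  have hEn : ∀ x ∈ Icc (0:ℝ) 1, (p - 1) / p * u' x ^ p + (u x ^ q / q - u x ^ p / p) ≤ 0 := by
    intro x hx
    have := (hEa m0 hx hx.1).trans hE0
    simp only [hE] at this
    rwa [hwp x hx] at this
  have hM : ∀ x ∈ Icc (0:ℝ) 1, u x ≤ exp (1 / p) := by
    intro x hx
    have hux := hpos x hx
    have h := hEn x hx
    have a : 0 ≤ (p - 1) / p * u' x ^ p :=
      mul_nonneg (div_nonneg (by linarith) (by linarith)) (Real.rpow_nonneg (hu'nn x hx) _)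
    have b : u x ^ q / q ≤ u x ^ p / p := by linarith
    have e : u x ^ q = u x ^ p * u x ^ (q - p) := by
      rw [← Real.rpow_add hux]; congr 1; ring
    have hup : 0 < u x ^ p := Real.rpow_pos_of_pos hux _
    have c : u x ^ (q - p) ≤ q / p := by
      rw [e, div_le_div_iff₀ (by linarith) (by linarith)] at b
      rw [le_div_iff₀ (by linarith)]
      apply le_of_mul_le_mul_left _ hup
      linarith
    have d : q / p ≤ exp (1 / p) ^ (q - p) := by
      rw [← Real.exp_mul]
      have := Real.add_one_le_exp (1 / p * (q - p))
      have e2 : q / p = 1 / p * (q - p) + 1 := by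
        have : p ≠ 0 := by linarith
        field_simp; ring
      linarith
    exact (Real.rpow_le_rpow_iff hux.le (exp_pos _).le (by linarith)).1 (c.trans d)
  have hS : u' s ≤ u s := by
    have hus := hpos s hs
    have h := hEn s hs
    have a : 0 ≤ u s ^ q / q := div_nonneg (Real.rpow_nonneg hus.le _) (by linarith)
    have b : (p - 1) / p * u' s ^ p ≤ u s ^ p / p := by linarith
    have c : 0 ≤ u' s ^ p := Real.rpow_nonneg (hu'nn s hs) _
    rw [div_mul_eq_mul_div, div_le_div_iff_of_pos_right (by linarith)] at b
    have d : u' s ^ p ≤ u s ^ p := by nlinarith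
    exact (Real.rpow_le_rpow_iff (hu'nn s hs) hus.le (by linarith)).1 d
  rw [abs_of_nonneg (hu'nn s hs)]
  linarith [hM r hr, hM s hs]
end

section
/- Let p > 2 and let N ≥ 1 be an integer. There exists exactly one function G ∈ C^1([0,1]) such that: G(r) ≥ 0 for all r ∈ [0,1]; G(1) = 1; G'(0) = 0; and the map r ↦ r^{N−1}|G'(r)|^{p−2}G'(r) is differentiable on (0,1) with derivative equal to r^{N−1}G(r)^{p−1} for every r ∈ (0,1). Moreover, this G is nondecreasing on [0,1]. -/
open Real Filter Set

/-- `G ∈ C^1([0,1])` (with derivative `G'`) is a radial profile solution of the Dirichlet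
problem `-Δ_p G + G^(p-1) = 0` in the unit ball of `ℝ^N` with `G = 1` on the boundary. -/
def IsRadialDirichletLimit (p : ℝ) (N : ℕ) (G G' : ℝ → ℝ) : Prop :=
  (∀ r ∈ Set.Icc (0:ℝ) 1, HasDerivWithinAt G (G' r) (Set.Icc 0 1) r) ∧
  ContinuousOn G' (Set.Icc 0 1) ∧
  (∀ r ∈ Set.Icc (0:ℝ) 1, 0 ≤ G r) ∧
  G 1 = 1 ∧ G' 0 = 0 ∧
  ∀ r ∈ Set.Ioo (0:ℝ) 1,
    HasDerivAt (fun s => s ^ (N - 1) * (|G' s| ^ (p - 2) * G' s))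
      (r ^ (N - 1) * (G r) ^ (p - 1)) r

namespace RDL
open MeasureTheory

lemma mink {a b : ℝ → ℝ} (ha : Continuous a) (hb : Continuous b) {q d : ℝ} (hq : 1 ≤ q)
    (hd : 0 ≤ d) (h : ∀ x ∈ Icc (0:ℝ) 1, |a x - b x| ≤ d) :
    (∫ x in (0:ℝ)..1, |a x| ^ q) ^ q⁻¹ ≤ (∫ x in (0:ℝ)..1, |b x| ^ q) ^ q⁻¹ + d := by
  have hq0 : 0 < q := by linarith
  set μ : Measure ℝ := volume.restrict (Ioc 0 1) with hμ
  have key : ∀ f : ℝ → ℝ, Continuous f → MemLp f (ENNReal.ofReal q) μ := by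
    intro f hf
    obtain ⟨C, hC⟩ := (isCompact_Icc (a := (0:ℝ)) (b := 1)).exists_bound_of_continuousOn
      hf.continuousOn
    refine MemLp.of_bound hf.aestronglyMeasurable C ?_
    rw [hμ, ae_restrict_iff' measurableSet_Ioc]
    exact Eventually.of_forall fun x hx => hC x ⟨hx.1.le, hx.2⟩
  have nrm : ∀ f : ℝ → ℝ, Continuous f →
      lpNorm f (ENNReal.ofReal q) μ = (∫ x in (0:ℝ)..1, |f x| ^ q) ^ q⁻¹ := by
    intro f hf
    rw [lpNorm_eq_integral_norm_rpow_toReal (by simpa using hq0) (by simp)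
      hf.aestronglyMeasurable, ENNReal.toReal_ofReal hq0.le,
      intervalIntegral.integral_of_le zero_le_one]
    rfl
  have h1 := lpNorm_le_lpNorm_add_lpNorm_sub' (f := a) (key b hb)
    (ENNReal.one_le_ofReal.2 hq)
  rw [nrm a ha, nrm b hb, nrm (a - b) (ha.sub hb)] at h1
  refine h1.trans (add_le_add le_rfl ?_)
  have h2 : (∫ x in (0:ℝ)..1, |(a - b) x| ^ q) ≤ ∫ x in (0:ℝ)..1, d ^ q := by
    apply intervalIntegral.integral_mono_on zero_le_one
    · apply Continuous.intervalIntegrable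
      exact (ha.sub hb).abs.rpow_const fun _ => Or.inr hq0.le
    · simp
    · intro x hx
      exact Real.rpow_le_rpow (abs_nonneg _) (h x hx) hq0.le
  have h3 : (∫ x in (0:ℝ)..1, d ^ q) = d ^ q := by simp
  rw [h3] at h2
  calc _ ≤ (d ^ q) ^ q⁻¹ := Real.rpow_le_rpow
        (intervalIntegral.integral_nonneg zero_le_one fun x _ => by positivity) h2 (by positivity)
    _ = d := Real.rpow_rpow_inv hd hq0.ne'

noncomputable def J (q : ℝ) (n : ℕ) (w : ℝ → ℝ) (t : ℝ) : ℝ :=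
  t * ∫ x in (0:ℝ)..1, x ^ n * |w (t * x)| ^ q

noncomputable def K (q : ℝ) (n : ℕ) (w : ℝ → ℝ) (t : ℝ) : ℝ := (J q n w t) ^ q⁻¹

noncomputable def Op (q : ℝ) (n : ℕ) (w : ℝ → ℝ) (r : ℝ) : ℝ := 1 - ∫ t in r..1, K q n w t

lemma J_cont {q : ℝ} (hq : 1 ≤ q) (n : ℕ) {w : ℝ → ℝ} (hw : Continuous w) :
    Continuous (J q n w) := by
  unfold J
  refine continuous_id.mul ?_
  apply intervalIntegral.continuous_parametric_intervalIntegral_of_continuous'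
  have : Continuous fun z : ℝ × ℝ => |w (z.1 * z.2)| ^ q :=
    Continuous.rpow_const (by fun_prop) fun _ => Or.inr (by linarith)
  exact (continuous_snd.pow n).mul this

lemma K_cont {q : ℝ} (hq : 1 ≤ q) (n : ℕ) {w : ℝ → ℝ} (hw : Continuous w) :
    Continuous (K q n w) :=
  (J_cont hq n hw).rpow_const fun _ => Or.inr (by positivity)

lemma J_nonneg (q : ℝ) (n : ℕ) (w : ℝ → ℝ) {t : ℝ} (ht : 0 ≤ t) : 0 ≤ J q n w t := by
  refine mul_nonneg ht (intervalIntegral.integral_nonneg zero_le_one fun x hx => ?_)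
  have := hx.1
  positivity

lemma K_nonneg (q : ℝ) (n : ℕ) (w : ℝ → ℝ) {t : ℝ} (ht : 0 ≤ t) : 0 ≤ K q n w t :=
  Real.rpow_nonneg (J_nonneg q n w ht) _

lemma K_zero {q : ℝ} (hq : 1 ≤ q) (n : ℕ) (w : ℝ → ℝ) : K q n w 0 = 0 := by
  have : q⁻¹ ≠ 0 := by positivity
  simp [K, J, Real.zero_rpow this]

lemma pow_mul_J (q : ℝ) (n : ℕ) (w : ℝ → ℝ) (t : ℝ) :
    t ^ n * J q n w t = ∫ s in (0:ℝ)..t, s ^ n * |w s| ^ q := by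
  have h := intervalIntegral.mul_integral_comp_mul_left (a := 0) (b := 1)
    (f := fun s => s ^ n * |w s| ^ q) (c := t)
  simp only [mul_zero, mul_one] at h
  rw [← h, J, mul_left_comm, ← intervalIntegral.integral_const_mul]
  simp only [mul_pow, mul_assoc]

lemma K_lip_aux {q : ℝ} (hq : 1 ≤ q) (n : ℕ) {w v : ℝ → ℝ} (hw : Continuous w)
    (hv : Continuous v) {d : ℝ} (hd : 0 ≤ d) (h : ∀ x ∈ Icc (0:ℝ) 1, |w x - v x| ≤ d)
    {t : ℝ} (ht : t ∈ Icc (0:ℝ) 1) : K q n w t ≤ K q n v t + t ^ q⁻¹ * d := by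
  have hq0 : 0 < q := by linarith
  have ht0 := ht.1
  have hc : Continuous fun x : ℝ => x ^ ((n:ℝ) / q) :=
    continuous_id.rpow_const fun _ => Or.inr (by positivity)
  have e : ∀ u : ℝ → ℝ,
      K q n u t = (∫ x in (0:ℝ)..1, |t ^ q⁻¹ * (x ^ ((n:ℝ) / q) * u (t * x))| ^ q) ^ q⁻¹ := by
    intro u
    rw [K, J, ← intervalIntegral.integral_const_mul]
    congr 1
    apply intervalIntegral.integral_congr
    intro x hx
    rw [uIcc_of_le zero_le_one] at hx
    have hx0 := hx.1
    have h1 : 0 ≤ t ^ q⁻¹ := by positivity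
    have h2 : 0 ≤ x ^ ((n:ℝ) / q) := by positivity
    simp only
    rw [abs_mul, abs_mul, abs_of_nonneg h1, abs_of_nonneg h2,
      Real.mul_rpow h1 (by positivity), Real.mul_rpow h2 (by positivity),
      Real.rpow_inv_rpow ht0 hq0.ne', ← Real.rpow_mul hx0, div_mul_cancel₀ _ hq0.ne',
      Real.rpow_natCast]
  rw [e w, e v]
  apply mink (by fun_prop) (by fun_prop) hq (by positivity)
  intro x hx
  rw [← mul_sub, ← mul_sub, abs_mul, abs_mul, abs_of_nonneg (by positivity)]
  gcongr
  have hx0 := hx.1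
  rw [abs_of_nonneg (by positivity)]
  have h1 : x ^ ((n:ℝ) / q) ≤ 1 := Real.rpow_le_one hx.1 hx.2 (by positivity)
  have h2 := h (t * x) ⟨by positivity, mul_le_one₀ ht.2 hx.1 hx.2⟩
  calc _ ≤ 1 * d := mul_le_mul h1 h2 (abs_nonneg _) zero_le_one
    _ = d := one_mul d

lemma K_lip {q : ℝ} (hq : 1 ≤ q) (n : ℕ) {w v : ℝ → ℝ} (hw : Continuous w)
    (hv : Continuous v) {d : ℝ} (hd : 0 ≤ d) (h : ∀ x ∈ Icc (0:ℝ) 1, |w x - v x| ≤ d)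
    {t : ℝ} (ht : t ∈ Icc (0:ℝ) 1) : |K q n w t - K q n v t| ≤ t ^ q⁻¹ * d := by
  have h1 := K_lip_aux hq n hw hv hd h ht
  have h2 := K_lip_aux hq n hv hw hd (fun x hx => by rw [abs_sub_comm]; exact h x hx) ht
  rw [abs_le]; constructor <;> linarith

lemma Op_lip {q : ℝ} (hq : 1 ≤ q) (n : ℕ) {w v : ℝ → ℝ} (hw : Continuous w)
    (hv : Continuous v) {d : ℝ} (hd : 0 ≤ d) (h : ∀ x ∈ Icc (0:ℝ) 1, |w x - v x| ≤ d)
    {r : ℝ} (hr : r ∈ Icc (0:ℝ) 1) : |Op q n w r - Op q n v r| ≤ (q⁻¹ + 1)⁻¹ * d := by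
  have hq0 : 0 < q := by linarith
  have hi : 0 < q⁻¹ := by positivity
  have hc : Continuous fun t : ℝ => t ^ q⁻¹ * d :=
    (continuous_id.rpow_const fun _ => Or.inr hi.le).mul continuous_const
  have e : Op q n w r - Op q n v r = ∫ t in r..1, (K q n v t - K q n w t) := by
    rw [intervalIntegral.integral_sub ((K_cont hq n hv).intervalIntegrable _ _)
      ((K_cont hq n hw).intervalIntegrable _ _), Op, Op]
    ring
  rw [e]
  calc _ ≤ ∫ t in r..1, |K q n v t - K q n w t| :=
        intervalIntegral.abs_integral_le_integral_abs hr.2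
    _ ≤ ∫ t in r..1, t ^ q⁻¹ * d := by
        apply intervalIntegral.integral_mono_on hr.2
        · exact ((K_cont hq n hv).sub (K_cont hq n hw)).abs.intervalIntegrable _ _
        · exact hc.intervalIntegrable _ _
        · intro t ht
          rw [abs_sub_comm]
          exact K_lip hq n hw hv hd h ⟨hr.1.trans ht.1, ht.2⟩
    _ ≤ ∫ t in (0:ℝ)..1, t ^ q⁻¹ * d := by
        apply intervalIntegral.integral_mono_interval hr.1 hr.2 le_rfl
        · rw [Filter.EventuallyLE, ae_restrict_iff' measurableSet_Ioc]
          refine Eventually.of_forall fun x hx => ?_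
          have := hx.1.le
          simp only [Pi.zero_apply]
          positivity
        · exact hc.intervalIntegrable _ _
    _ = (q⁻¹ + 1)⁻¹ * d := by
        rw [intervalIntegral.integral_mul_const, integral_rpow (Or.inl (by linarith)),
          Real.one_rpow, Real.zero_rpow (by positivity)]
        simp

lemma Op_deriv {q : ℝ} (hq : 1 ≤ q) (n : ℕ) {w : ℝ → ℝ} (hw : Continuous w) (r : ℝ) :
    HasDerivAt (Op q n w) (K q n w r) r := by
  have hk := K_cont hq n hw
  have h := intervalIntegral.integral_hasDerivAt_left (hk.intervalIntegrable r 1)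
    (hk.stronglyMeasurableAtFilter _ _) hk.continuousAt
  have h2 := h.const_sub 1
  rw [neg_neg] at h2
  exact h2

noncomputable def T {q : ℝ} (hq : 1 ≤ q) (n : ℕ) (f : C(Icc (0:ℝ) 1, ℝ)) : C(Icc (0:ℝ) 1, ℝ) where
  toFun r := Op q n (IccExtend zero_le_one f) r
  continuous_toFun := by
    have h : Continuous (Op q n (IccExtend zero_le_one f)) :=
      continuous_iff_continuousAt.2 fun r =>
        (Op_deriv hq n (f.continuous.Icc_extend') r).continuousAt
    exact h.comp continuous_subtype_val

lemma T_contr {q : ℝ} (hq : 1 ≤ q) (n : ℕ) :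
    ContractingWith (Real.toNNReal (q⁻¹ + 1)⁻¹) (T hq n) := by
  have hi : 0 < q⁻¹ := by positivity
  constructor
  · rw [← NNReal.coe_lt_coe, Real.coe_toNNReal _ (by positivity)]
    exact inv_lt_one_of_one_lt₀ (by linarith)
  · apply LipschitzWith.of_dist_le_mul
    intro f g
    rw [Real.coe_toNNReal _ (by positivity), ContinuousMap.dist_le (by positivity)]
    intro r
    rw [Real.dist_eq]
    refine Op_lip hq n f.continuous.Icc_extend' g.continuous.Icc_extend' dist_nonneg ?_ r.2
    intro x hx
    rw [IccExtend_of_mem _ _ hx, IccExtend_of_mem _ _ hx, ← Real.dist_eq]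
    exact ContinuousMap.dist_apply_le_dist _

lemma sol_fixed {p : ℝ} (hp : 2 < p) {N : ℕ} {H H' : ℝ → ℝ}
    (h : IsRadialDirichletLimit p N H H') {w : ℝ → ℝ} (hw : Continuous w)
    (hwH : ∀ r ∈ Icc (0:ℝ) 1, w r = H r) {r : ℝ} (hr : r ∈ Icc (0:ℝ) 1) :
    Op (p - 1) (N - 1) w r = H r := by
  obtain ⟨h1, h2, h3, h4, h5, h6⟩ := h
  have hq : 1 ≤ p - 1 := by linarith
  have hq0 : 0 < p - 1 := by linarith
  have hF : Continuous fun s : ℝ => s ^ (N - 1) * |w s| ^ (p - 1) :=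
    (continuous_pow _).mul (hw.abs.rpow_const fun _ => Or.inr hq0.le)
  have hφ : ContinuousOn (fun s => s ^ (N - 1) * (|H' s| ^ (p - 2) * H' s)) (Icc 0 1) :=
    (continuousOn_pow _).mul ((h2.abs.rpow_const fun _ _ => Or.inr (by linarith)).mul h2)
  have hK : ∀ r ∈ Icc (0:ℝ) 1, H' r = K (p - 1) (N - 1) w r := by
    intro r hr
    rcases hr.1.eq_or_lt with h0 | h0
    · rw [← h0, K_zero hq, h5]
    have hint := intervalIntegral.integral_eq_sub_of_hasDerivAt_of_le hr.1
      (hφ.mono (Icc_subset_Icc le_rfl hr.2))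
      (f' := fun s : ℝ => s ^ (N - 1) * |w s| ^ (p - 1)) (fun x hx => by
        have hx' : x ∈ Ioo (0:ℝ) 1 := ⟨hx.1, hx.2.trans_le hr.2⟩
        have := h6 x hx'
        rwa [← hwH x (Ioo_subset_Icc_self hx'), ← abs_of_nonneg
          (by rw [hwH x (Ioo_subset_Icc_self hx')]; exact h3 x (Ioo_subset_Icc_self hx') :
            0 ≤ w x)] at this) (hF.intervalIntegrable _ _)
    rw [← pow_mul_J, h5] at hint
    simp only [mul_zero, sub_zero] at hint
    have hJ := mul_left_cancel₀ (by positivity) hint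
    have hJ0 := J_nonneg (p - 1) (N - 1) w hr.1
    have hH0 : 0 ≤ H' r := by
      by_contra hneg
      push Not at hneg
      have : 0 < |H' r| ^ (p - 2) := Real.rpow_pos_of_pos (abs_pos.2 hneg.ne) _
      nlinarith
    have : |H' r| ^ (p - 2) * H' r = H' r ^ (p - 1) := by
      rw [abs_of_nonneg hH0]
      nth_rewrite 2 [← Real.rpow_one (H' r)]
      rw [← Real.rpow_add' hH0 (by linarith)]
      congr 1; ring
    rw [K, hJ, this, Real.rpow_rpow_inv hH0 hq0.ne']
  have hint := intervalIntegral.integral_eq_sub_of_hasDerivAt_of_le hr.2 (f := H)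
    (f' := K (p - 1) (N - 1) w)
    (fun x hx => ((h1 x ⟨hr.1.trans hx.1, hx.2⟩).continuousWithinAt.mono
      (Icc_subset_Icc hr.1 le_rfl)))
    (fun x hx => by
      have hx' : x ∈ Icc (0:ℝ) 1 := ⟨hr.1.trans hx.1.le, hx.2.le⟩
      rw [← hK x hx']
      exact (h1 x hx').hasDerivAt (Icc_mem_nhds (hr.1.trans_lt hx.1) hx.2))
    ((K_cont hq _ hw).intervalIntegrable _ _)
  rw [Op, hint, h4]; ring

lemma fixed_sol {p : ℝ} (hp : 2 < p) {N : ℕ} {w : ℝ → ℝ} (hw : Continuous w)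
    (hfix : ∀ r ∈ Icc (0:ℝ) 1, Op (p - 1) (N - 1) w r = w r) :
    IsRadialDirichletLimit p N (Op (p - 1) (N - 1) w) (K (p - 1) (N - 1) w) := by
  have hq : 1 ≤ p - 1 := by linarith
  have hq0 : 0 < p - 1 := by linarith
  have hi : 0 < (p - 1)⁻¹ := by positivity
  have hk := K_cont hq (N - 1) hw
  have hF : Continuous fun s : ℝ => s ^ (N - 1) * |w s| ^ (p - 1) :=
    (continuous_pow _).mul (hw.abs.rpow_const fun _ => Or.inr hq0.le)
  have hle : ∀ r ∈ Icc (0:ℝ) 1, w r ≤ 1 := by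
    intro r hr
    rw [← hfix r hr, Op]
    have := intervalIntegral.integral_nonneg (μ := volume) hr.2
      (fun t ht => K_nonneg (p - 1) (N - 1) w (hr.1.trans ht.1))
    linarith
  have hnn : ∀ r ∈ Icc (0:ℝ) 1, 0 ≤ w r := by
    obtain ⟨x₀, hx₀, hmax⟩ := (isCompact_Icc (a := (0:ℝ)) (b := 1)).exists_isMaxOn
      (nonempty_Icc.2 zero_le_one) hw.abs.continuousOn
    set M := |w x₀| with hM
    have hM0 : 0 ≤ M := abs_nonneg _
    have hc1 : ((p - 1)⁻¹ + 1)⁻¹ ≤ 1 := inv_le_one_of_one_le₀ (by linarith)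
    have hc0 : 0 ≤ ((p - 1)⁻¹ + 1)⁻¹ := by positivity
    have hz : ∀ r, Op (p - 1) (N - 1) (fun _ => 0) r = 1 := by
      intro r
      simp [Op, K, J, Real.zero_rpow hq0.ne', Real.zero_rpow hi.ne']
    have hlow : ∀ r ∈ Icc (0:ℝ) 1, 1 - M ≤ w r := by
      intro r hr
      have := Op_lip hq (N - 1) hw (v := fun _ => 0) continuous_const hM0
        (fun x hx => by simpa using hmax hx) hr
      rw [hz, hfix r hr, abs_le] at this
      nlinarith [this.1]
    have hM1 : M ≤ 1 := by
      rw [hM, abs_le]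
      refine ⟨?_, hle _ hx₀⟩
      rcases le_total 0 (w x₀) with h | h
      · linarith
      · have := hlow x₀ hx₀
        rw [hM, abs_of_nonpos h] at this
        linarith
    intro r hr
    linarith [hlow r hr]
  refine ⟨fun r _ => (Op_deriv hq _ hw r).hasDerivWithinAt, hk.continuousOn,
    fun r hr => by rw [hfix r hr]; exact hnn r hr, by simp [Op], K_zero hq _ _, ?_⟩
  intro r hr
  have hr' := Ioo_subset_Icc_self hr
  have hd : HasDerivAt (fun t => ∫ s in (0:ℝ)..t, s ^ (N - 1) * |w s| ^ (p - 1))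
      (r ^ (N - 1) * |w r| ^ (p - 1)) r :=
    intervalIntegral.integral_hasDerivAt_right (hF.intervalIntegrable _ _)
      (hF.stronglyMeasurableAtFilter _ _) hF.continuousAt
  rw [hfix r hr']
  rw [abs_of_nonneg (hnn r hr')] at hd
  refine hd.congr_of_eventuallyEq ?_
  filter_upwards [Ioo_mem_nhds hr.1 hr.2] with s hs
  have hK0 := K_nonneg (p - 1) (N - 1) w hs.1.le
  rw [← pow_mul_J]
  congr 1
  rw [abs_of_nonneg hK0]
  nth_rewrite 2 [← Real.rpow_one (K (p - 1) (N - 1) w s)]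
  rw [← Real.rpow_add' hK0 (by linarith), show p - 2 + 1 = p - 1 by ring, K,
    Real.rpow_inv_rpow (J_nonneg _ _ _ hs.1.le) hq0.ne']

end RDL

theorem stmt_14 (p : ℝ) (hp : 2 < p) (N : ℕ) (hN : 1 ≤ N) :
    ∃ G G' : ℝ → ℝ,
      IsRadialDirichletLimit p N G G' ∧
      MonotoneOn G (Icc (0:ℝ) 1) ∧
      ∀ H H' : ℝ → ℝ, IsRadialDirichletLimit p N H H' →
        ∀ r ∈ Icc (0:ℝ) 1, H r = G r := by
  have hq : 1 ≤ p - 1 := by linarith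
  have hT := RDL.T_contr hq (N - 1)
  set g := ContractingWith.fixedPoint (RDL.T hq (N - 1)) hT with hg
  have hfp : RDL.T hq (N - 1) g = g := ContractingWith.fixedPoint_isFixedPt hT
  have hw : Continuous (IccExtend (zero_le_one' ℝ) g) := g.continuous.Icc_extend'
  have hfix : ∀ r ∈ Icc (0:ℝ) 1,
      RDL.Op (p - 1) (N - 1) (IccExtend zero_le_one g) r = IccExtend zero_le_one g r := by
    intro r hr
    rw [IccExtend_of_mem _ _ hr]
    exact congrArg (fun f : C(Icc (0:ℝ) 1, ℝ) => f ⟨r, hr⟩) hfp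
  refine ⟨_, _, RDL.fixed_sol hp hw hfix, ?_, ?_⟩
  · apply monotoneOn_of_hasDerivWithinAt_nonneg (convex_Icc 0 1)
      (fun r _ => (RDL.Op_deriv hq _ hw r).continuousAt.continuousWithinAt)
      (fun r _ => (RDL.Op_deriv hq _ hw r).hasDerivWithinAt)
    intro r hr
    exact RDL.K_nonneg _ _ _ (interior_subset hr).1
  · intro H H' hH r hr
    let f : C(Icc (0:ℝ) 1, ℝ) := ⟨fun x => H x, (continuousOn_iff_continuous_restrict.1
      fun x hx => (hH.1 x hx).continuousWithinAt)⟩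
    have hf : RDL.T hq (N - 1) f = f := by
      ext x
      exact RDL.sol_fixed hp hH f.continuous.Icc_extend'
        (fun r hr => by rw [IccExtend_of_mem _ _ hr]; rfl) x.2
    have hfg : f = g := ContractingWith.fixedPoint_unique hT hf
    rw [hfix r hr, IccExtend_of_mem _ _ hr, ← hfg]
    rfl
end
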